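/- With p, q ∈ ℚ[X] as in the context (the Belyi map of degree 52 for Aut(PSL(3,3))), the polynomial F = p − t·q ∈ K[X] has degree 52, is irreducible over K = ℚ(t), and its Galois group Polynomial.Gal F (the Galois group of the splitting field of F over K) has cardinality 11232, the order of Aut(PSL(3,3)). -/

import Mathlib

open Polynomial

noncomputable section

def p : Polynomial ℚ :=
    4 * (4 * X ^ 4 - 16 * X ^ 3 - 24 * X ^ 2 - 8 * X - 1) ^ 2 * (4 * X ^ 4 - 16 * X ^ 3 - 18 *
    X ^ 2 - 8 * X - 1) * (4 * X ^ 4 + 8 * X ^ 3 + 36 * X ^ 2 + 28 * X + 5) ^ 4 * (4 * X ^ 6 -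
    36 * X ^ 5 - 24 * X ^ 4 - 4 * X ^ 3 + 9 * X ^ 2 + 3 * X + 1) ^ 4

def r : Polynomial ℚ :=
    27 * (X + 1) ^ 8 * (2 * X ^ 2 - 8 * X - 1) ^ 8 * (2 * X ^ 2 + 1) ^ 4 * (6 * X ^ 2 + 4 * X
    + 1) ^ 8

def q : Polynomial ℚ := p - r

/-- `F = p − t·q ∈ K[X]` where `K = ℚ(t)` and `t = RatFunc.X`. -/
def F : Polynomial (RatFunc ℚ) :=
  p.map (algebraMap ℚ (RatFunc ℚ)) - Polynomial.C RatFunc.X * q.map (algebraMap ℚ (RatFunc ℚ))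

end

/-!
In the coordinate `y = 2X` and the parameter `s = t / (1 - t)`, the polynomial `F` becomes, up to a
scalar, the monic polynomial `numer y + 27 s denom y` over `ℤ[s]`. It is linear in `s` with coprime
coefficients, hence irreducible.

The fibre product of the Belyi map with itself contains a symmetric `(6, 6)`-correspondence, which
makes every fibre into a graph on which the Galois group acts. Away from the ramification, reducing
`s` and the constants to a finite field preserves this graph. Reduction modulo `571` thereby
identifies it with the graph of the 52 flags of the projective plane of order three, and Frobenius
elements above `7`, `11` and `73` show that the Galois group is transitive on longer and longer
configurations of flags. There are `52 * 6 * 3 * 3 * 2 * 2 = 11232` configurations of the last kind,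
and an automorphism of the flag graph that fixes one of them is trivial, so that the Galois group
acts simply transitively on them.
-/

namespace Belyi

section Actions

variable {G α β : Type*} [Group G] [MulAction G α] [MulAction G β]

/-- The set `S` is stable under `G`, and any two of its points are conjugate under `G`. -/
structure TransitiveOn (G : Type*) {α : Type*} [Group G] [MulAction G α] (S : Set α) : Prop where
  smul_mem (g : G) {a : α} : a ∈ S → g • a ∈ S
  exists_smul_eq {a b : α} : a ∈ S → b ∈ S → ∃ g : G, g • a = b

/-- The pairs `(a, b)` with `a ∈ S` and `b` in the set `T a` of admissible continuations of `a`. -/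
def extensions (S : Set α) (T : α → Set β) : Set (α × β) :=
  {x | x.1 ∈ S ∧ x.2 ∈ T x.1}

/-- The family `T` of sets of continuations is stable under `G`. -/
def Equivariant (G : Type*) {α β : Type*} [Group G] [MulAction G α] [MulAction G β]
    (T : α → Set β) : Prop :=
  ∀ (g : G) ⦃a : α⦄ ⦃b : β⦄, b ∈ T a → g • b ∈ T (g • a)

variable {S : Set α} {T : α → Set β}

theorem Equivariant.smul_mem_iff (hT : Equivariant G T) (g : G) {a : α} {b : β} :
    g • b ∈ T (g • a) ↔ b ∈ T a :=
  ⟨fun h => by simpa only [inv_smul_smul] using hT g⁻¹ h, fun h => hT g h⟩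

theorem Equivariant.ncard_smul (hT : Equivariant G T) (g : G) (a : α) :
    (T (g • a)).ncard = (T a).ncard := by
  have h : T (g • a) = (g • ·) '' T a := by
    ext b
    refine ⟨fun hb => ⟨g⁻¹ • b, ?_, smul_inv_smul g b⟩, ?_⟩
    · simpa only [inv_smul_smul] using hT g⁻¹ hb
    · rintro ⟨b, hb, rfl⟩
      exact hT g hb
  rw [h, Set.ncard_image_of_injective _ (MulAction.injective g)]

theorem TransitiveOn.extensions (hS : TransitiveOn G S) (hT : Equivariant G T) {c : α}
    (hc : c ∈ S) (hcT : ∀ b ∈ T c, ∀ b' ∈ T c, ∃ g : G, g • c = c ∧ g • b = b') :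
    TransitiveOn G (extensions S T) where
  smul_mem g _ h := ⟨hS.smul_mem g h.1, hT g h.2⟩
  exists_smul_eq := by
    rintro ⟨a, b⟩ ⟨a', b'⟩ ⟨ha, hb⟩ ⟨ha', hb'⟩
    obtain ⟨g, rfl⟩ := hS.exists_smul_eq hc ha
    obtain ⟨g', rfl⟩ := hS.exists_smul_eq hc ha'
    obtain ⟨k, hkc, hkb⟩ := hcT (g⁻¹ • b) (by simpa only [inv_smul_smul] using hT g⁻¹ hb)
      (g'⁻¹ • b') (by simpa only [inv_smul_smul] using hT g'⁻¹ hb')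
    refine ⟨g' * k * g⁻¹, Prod.ext ?_ ?_⟩
    · simp only [Prod.smul_fst, mul_smul, inv_smul_smul, hkc]
    · simp only [Prod.smul_snd, mul_smul, hkb, smul_inv_smul]

theorem TransitiveOn.ncard_eq (hS : TransitiveOn G S) (hT : Equivariant G T) {a c : α}
    (ha : a ∈ S) (hc : c ∈ S) : (T a).ncard = (T c).ncard := by
  obtain ⟨g, rfl⟩ := hS.exists_smul_eq hc ha
  exact hT.ncard_smul g c

theorem TransitiveOn.ncard_extensions (hS : TransitiveOn G S) (hT : Equivariant G T) {c : α}
    (hc : c ∈ S) : (Belyi.extensions S T).ncard = S.ncard * (T c).ncard := by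
  choose g hg using fun a : S => hS.exists_smul_eq hc a.2
  let e : Belyi.extensions S T ≃ S × T c :=
    { toFun x := (⟨x.1.1, x.2.1⟩, ⟨(g ⟨x.1.1, x.2.1⟩)⁻¹ • x.1.2, by
        rw [← hT.smul_mem_iff (g ⟨x.1.1, x.2.1⟩), hg, smul_inv_smul]
        exact x.2.2⟩)
      invFun y := ⟨(y.1, g y.1 • (y.2 : β)), y.1.2, by
        have := hT (g y.1) y.2.2
        rwa [hg] at this⟩
      left_inv x := by simp only [smul_inv_smul]
      right_inv y := by simp only [inv_smul_smul] }
  rw [← Nat.card_coe_set_eq, Nat.card_congr e, Nat.card_prod, Nat.card_coe_set_eq,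
    Nat.card_coe_set_eq]

/-- A permutation all of whose cycles on a finite set are longer than half of the set has only one
cycle there. -/
theorem exists_zpow_smul_eq {σ : G} {B : Set β} (hB : B.Finite) {m : ℕ} (hm : B.ncard < 2 * m)
    (hσ : ∀ b ∈ B, σ • b ∈ B) (hfree : ∀ b ∈ B, ∀ i, 0 < i → i < m → σ ^ i • b ≠ b) {b b' : β}
    (hb : b ∈ B) (hb' : b' ∈ B) : ∃ n : ℤ, σ ^ n • b = b' := by
  classical
  have hpow : ∀ b ∈ B, ∀ i : ℕ, σ ^ i • b ∈ B := fun b hb i => by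
    induction i with
    | zero => simpa only [pow_zero, one_smul] using hb
    | succ i ih => simpa only [pow_succ', mul_smul] using hσ _ ih
  let start (b : β) : Finset β := (Finset.range m).image fun i => σ ^ i • b
  have card_start {b : β} (hb : b ∈ B) : (start b).card = m := by
    refine (Finset.card_image_of_injOn ?_).trans (Finset.card_range m)
    intro i hi j hj hij
    wlog h : i < j generalizing i j
    · exact (not_lt.1 h).eq_or_lt.elim Eq.symm fun h => (this hj hi hij.symm h).symm
    refine absurd ?_ (hfree b hb (j - i) (Nat.sub_pos_of_lt h)
      ((Nat.sub_le j i).trans_lt (by simpa using hj)))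
    rw [← smul_left_cancel_iff (σ ^ i), ← mul_smul, ← pow_add, Nat.add_sub_cancel' h.le]
    exact hij.symm
  have start_subset {b : β} (hb : b ∈ B) : start b ⊆ hB.toFinset := by
    simpa only [start, Finset.image_subset_iff, hB.mem_toFinset] using fun i _ => hpow b hb i
  obtain ⟨c, hc⟩ : (start b ∩ start b').Nonempty :=
    Finset.inter_nonempty_of_card_lt_card_add_card (start_subset hb) (start_subset hb') <| by
      rw [card_start hb, card_start hb', ← Set.ncard_eq_toFinset_card _ hB]
      lia
  simp only [start, Finset.mem_inter, Finset.mem_image] at hc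
  obtain ⟨⟨i, -, rfl⟩, j, -, hij⟩ := hc
  refine ⟨-(j : ℤ) + i, ?_⟩
  rw [zpow_add, mul_smul, zpow_natCast, ← hij, zpow_neg, zpow_natCast, inv_smul_smul]

theorem TransitiveOn.extend (hS : TransitiveOn G S) (hT : Equivariant G T) {a₀ : α}
    (ha₀ : a₀ ∈ S) {n m : ℕ} (hn : (T a₀).ncard = n) (hpos : n ≠ 0) (hlt : n < 2 * m)
    (h : ∃ a ∈ S, ∃ σ : G, σ • a = a ∧ ∀ b ∈ T a, ∀ i, 0 < i → i < m → σ ^ i • b ≠ b) :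
    TransitiveOn G (Belyi.extensions S T) ∧ (Belyi.extensions S T).ncard = S.ncard * n := by
  obtain ⟨a, ha, σ, hσ, hfree⟩ := h
  have hna : (T a).ncard = n := (hS.ncard_eq hT ha ha₀).trans hn
  have hσT : ∀ b ∈ T a, σ • b ∈ T a := fun b hb => by
    have := hT σ hb
    rwa [hσ] at this
  refine ⟨hS.extensions hT ha fun b hb b' hb' => ?_, by rw [hS.ncard_extensions hT ha, hna]⟩
  obtain ⟨i, hi⟩ := exists_zpow_smul_eq (Set.finite_of_ncard_ne_zero (hna.trans_ne hpos))
    (hna.trans_lt hlt) hσT hfree hb hb'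
  exact ⟨σ ^ i, (MulAction.stabilizer G a).zpow_mem hσ i, hi⟩

theorem TransitiveOn.extend_of_smul_ne (hS : TransitiveOn G S) (hT : Equivariant G T) {a₀ : α}
    (ha₀ : a₀ ∈ S) {n : ℕ} (hn : (T a₀).ncard = n) (hpos : n ≠ 0) (hlt : n < 4)
    (h : ∃ a ∈ S, ∃ σ : G, σ • a = a ∧ ∀ b ∈ T a, σ • b ≠ b) :
    TransitiveOn G (Belyi.extensions S T) ∧ (Belyi.extensions S T).ncard = S.ncard * n := by
  obtain ⟨a, ha, σ, hσ, hfree⟩ := h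
  refine hS.extend hT ha₀ hn hpos (m := 2) hlt ⟨a, ha, σ, hσ, fun b hb i hi hi' => ?_⟩
  obtain rfl : i = 1 := by lia
  rw [pow_one]
  exact hfree b hb

theorem TransitiveOn.card_eq_ncard (hS : TransitiveOn G S) {a : α} (ha : a ∈ S)
    (hstab : ∀ g : G, g • a = a → g = 1) : Nat.card G = S.ncard := by
  refine (Nat.card_congr (Equiv.ofBijective (fun g : G => (⟨g • a, hS.smul_mem g ha⟩ : S))
    ⟨fun g h hgh => ?_, fun b => ?_⟩)).trans (Nat.card_coe_set_eq S)
  · have : g • a = h • a := congrArg Subtype.val hgh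
    refine (inv_mul_eq_one.1 (hstab (h⁻¹ * g) ?_)).symm
    rw [mul_smul, this, inv_smul_smul]
  · obtain ⟨g, hg⟩ := hS.exists_smul_eq ha b.2
    exact ⟨g, Subtype.ext hg⟩

end Actions

section Graphs

variable {W W' : Type*} {Γ : SimpleGraph W} {Γ' : SimpleGraph W'}

/-- The neighbours of `y` at distance two from `x`, for an edge `xy`: in a graph of flags these
are the continuations of the gallery `x, y` through the other panel of `y`. -/
def forward (Γ : SimpleGraph W) (x y : W) : Set W :=
  Γ.neighborSet y \ insert x (Γ.neighborSet x)

theorem mem_forward {x y z : W} : z ∈ forward Γ x y ↔ Γ.Adj y z ∧ z ≠ x ∧ ¬Γ.Adj x z := by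
  simp only [forward, Set.mem_sdiff, SimpleGraph.mem_neighborSet, Set.mem_insert_iff, not_or, ne_eq]

instance [DecidableEq W] [DecidableRel Γ.Adj] (x y z : W) : Decidable (z ∈ forward Γ x y) :=
  decidable_of_iff' _ mem_forward

theorem embedding_mem_forward_iff (e : Γ ↪g Γ') {x y z : W} :
    e z ∈ forward Γ' (e x) (e y) ↔ z ∈ forward Γ x y := by
  simp only [mem_forward, e.map_adj_iff, e.injective.ne_iff]

instance [DecidableRel Γ.Adj] (x y z : W) : Decidable (z ∈ Γ.commonNeighbors x y) :=
  inferInstanceAs (Decidable (_ ∧ _))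

theorem embedding_mem_commonNeighbors_iff (e : Γ ↪g Γ') {x y z : W} :
    e z ∈ Γ'.commonNeighbors (e x) (e y) ↔ z ∈ Γ.commonNeighbors x y := by
  simp only [SimpleGraph.mem_commonNeighbors, e.map_adj_iff]

section ClosedRange

variable (e : Γ ↪g Γ') (he : ∀ x, Γ'.neighborSet (e x) ⊆ Set.range e)
include he

theorem neighborSet_embedding (x : W) : Γ'.neighborSet (e x) = e '' Γ.neighborSet x := by
  ext z
  refine ⟨fun hz => ?_, ?_⟩
  · obtain ⟨w, rfl⟩ := he x hz
    exact ⟨w, e.map_adj_iff.1 hz, rfl⟩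
  · rintro ⟨w, hw, rfl⟩
    exact e.map_adj_iff.2 hw

theorem forward_embedding (x y : W) : forward Γ' (e x) (e y) = e '' forward Γ x y := by
  simp only [forward, neighborSet_embedding e he, Set.image_sdiff e.injective, Set.image_insert_eq]

theorem commonNeighbors_embedding (x y : W) :
    Γ'.commonNeighbors (e x) (e y) = e '' Γ.commonNeighbors x y := by
  simp only [SimpleGraph.commonNeighbors, neighborSet_embedding e he, Set.image_inter e.injective]

end ClosedRange

/-- Galleries `a, b` in the vertex set `V`. -/
def galleries₂ (Γ : SimpleGraph W) (V : Set W) : Set (W × W) :=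
  extensions V Γ.neighborSet

/-- Galleries `a, b, c` without backtracking. -/
def galleries₃ (Γ : SimpleGraph W) (V : Set W) : Set ((W × W) × W) :=
  extensions (galleries₂ Γ V) fun x => forward Γ x.1 x.2

/-- Galleries `a, b, c, d` without backtracking. -/
def galleries₄ (Γ : SimpleGraph W) (V : Set W) : Set (((W × W) × W) × W) :=
  extensions (galleries₃ Γ V) fun x => forward Γ x.1.2 x.2

/-- Galleries `a, b, c, d` with a further vertex of the panel of `b, c`. -/
def markedGalleries (Γ : SimpleGraph W) (V : Set W) : Set ((((W × W) × W) × W) × W) :=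
  extensions (galleries₄ Γ V) fun x => Γ.commonNeighbors x.1.1.2 x.1.2

/-- Galleries `a, b, c, d` with further vertices of the panels of `b, c` and of `c, d`. In the
graph of flags of a projective plane such a configuration determines a projective frame. -/
def frames (Γ : SimpleGraph W) (V : Set W) : Set (((((W × W) × W) × W) × W) × W) :=
  extensions (markedGalleries Γ V) fun x => Γ.commonNeighbors x.1.1.2 x.1.2

section Invariance

variable {G : Type*} [Group G] [MulAction G W]
  (hΓ : ∀ (g : G) ⦃x y : W⦄, Γ.Adj x y → Γ.Adj (g • x) (g • y))
include hΓ

theorem adj_smul_iff (g : G) {x y : W} : Γ.Adj (g • x) (g • y) ↔ Γ.Adj x y :=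
  ⟨fun h => by simpa only [inv_smul_smul] using hΓ g⁻¹ h, fun h => hΓ g h⟩

theorem smul_mem_forward (g : G) {x y z : W} (hz : z ∈ forward Γ x y) :
    g • z ∈ forward Γ (g • x) (g • y) := by
  simpa only [mem_forward, adj_smul_iff hΓ, ne_eq, smul_left_cancel_iff] using hz

theorem smul_mem_commonNeighbors (g : G) {x y z : W} (hz : z ∈ Γ.commonNeighbors x y) :
    g • z ∈ Γ.commonNeighbors (g • x) (g • y) :=
  ⟨hΓ g hz.1, hΓ g hz.2⟩

end Invariance

end Graphs

section Frobenius

universe v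

attribute [local instance] Ideal.Quotient.field in
theorem exists_frobenius {R G : Type*} {B : Type v} [CommRing R] [CommRing B] [Algebra R B]
    [FaithfulSMul R B] [Group G] [Finite G] [MulSemiringAction G B] [SMulCommClass G R B]
    [Algebra.IsInvariant R B G] {l : ℕ} [Fact l.Prime] (φ : R →+* ZMod l) :
    ∃ (k : Type v) (_ : Field k) (_ : Algebra (ZMod l) k) (ρ : B →+* k) (σ : G),
      (∀ r, ρ (algebraMap R B r) = algebraMap (ZMod l) k (φ r)) ∧ ∀ b, ρ (σ • b) = ρ b ^ l := by
  have hφ : Function.Surjective φ := ZMod.ringHom_surjective φ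
  let P := RingHom.ker φ
  let e : R ⧸ P ≃+* ZMod l := RingHom.quotientKerEquivOfSurjective hφ
  have : P.IsMaximal := RingHom.ker_isMaximal_of_surjective φ hφ
  have : Algebra.IsIntegral R B := Algebra.IsInvariant.isIntegral R B G
  obtain ⟨Q, _, hQP⟩ := Ideal.exists_maximal_ideal_liesOver_of_isIntegral (S := B) P
  have : Finite (R ⧸ P) := .of_equiv _ e.symm.toEquiv
  have : Module.Finite (R ⧸ P) (B ⧸ Q) := Ideal.Quotient.finite_of_isInvariant G P Q
  have : Finite (B ⧸ Q) := Module.finite_of_finite (R ⧸ P)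
  obtain ⟨σ, hσ⟩ := IsArithFrobAt.exists_of_isInvariant R G Q
  have hcard : Nat.card (R ⧸ Q.under R) = l := by
    rw [← hQP.over, Nat.card_congr e.toEquiv, Nat.card_zmod]
  refine ⟨B ⧸ Q, inferInstance, ((algebraMap (R ⧸ P) (B ⧸ Q)).comp e.symm.toRingHom).toAlgebra,
    Ideal.Quotient.mk Q, σ, fun r => ?_, fun b => ?_⟩
  · have : e.symm (φ r) = Ideal.Quotient.mk P r := e.symm_apply_eq.2 rfl
    exact (congrArg (algebraMap (R ⧸ P) (B ⧸ Q)) this).symm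
  · rw [← map_pow, Ideal.Quotient.eq, ← hcard]
    exact hσ b

end Frobenius

section Coefficients

/-- A polynomial given by the list of its coefficients, constant term first, for computations in
the kernel. Bivariate polynomials are represented in `Coeffs (Coeffs R)`, and the operations do not
assume any laws of `R` so that this nesting is possible. -/
structure Coeffs (R : Type*) where
  toList : List R

namespace Coeffs

variable {R S : Type*}

section Operations

variable [Zero R] [One R] [Add R] [Sub R] [Mul R]

/-- Coefficientwise sum. -/
def addList : List R → List R → List R
  | [], b => b
  | a, [] => a
  | x :: a, y :: b => (x + y) :: addList a b

/-- Coefficientwise difference. -/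
def subList : List R → List R → List R
  | [], b => b.map (0 - ·)
  | a, [] => a
  | x :: a, y :: b => (x - y) :: subList a b

/-- Convolution of coefficient lists. -/
def mulList : List R → List R → List R
  | [], _ => []
  | x :: a, b => addList (b.map (x * ·)) (0 :: mulList a b)

instance : Zero (Coeffs R) := ⟨⟨[]⟩⟩
instance : One (Coeffs R) := ⟨⟨[1]⟩⟩
instance : Add (Coeffs R) := ⟨fun a b => ⟨addList a.toList b.toList⟩⟩
instance : Sub (Coeffs R) := ⟨fun a b => ⟨subList a.toList b.toList⟩⟩
instance : Mul (Coeffs R) := ⟨fun a b => ⟨mulList a.toList b.toList⟩⟩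
instance : Pow (Coeffs R) ℕ := ⟨fun a n => npowRec n a⟩

/-- The coefficients of `c + X * v` after replacing `X ^ n` by the polynomial `g` of degree less
than `n`, where `n` is the length of `g`. -/
def reduceCons (g : List R) (c : R) (v : List R) : List R :=
  if v.length = g.length then addList (c :: v.dropLast) (g.map (v.getLastD 0 * ·)) else c :: v

/-- Reduction modulo the monic polynomial `X ^ n - g`, where `n` is the length of `g`. -/
def reduce (g a : Coeffs R) : Coeffs R :=
  ⟨a.toList.foldr (reduceCons g.toList) []⟩

end Operations

/-- The value at `y` of the polynomial `a` whose coefficients are mapped by `φ`. -/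
def value [Zero S] [Add S] [Mul S] (φ : R → S) (y : S) (a : Coeffs R) : S :=
  a.toList.foldr (fun c v => φ c + y * v) 0

/-- A map that respects the arithmetic operations; unlike for a ring homomorphism, its source need
not be a ring. -/
structure IsArithmetic [Zero R] [One R] [Add R] [Sub R] [Mul R] [CommRing S] (φ : R → S) :
    Prop where
  map_zero : φ 0 = 0
  map_one : φ 1 = 1
  map_add (a b : R) : φ (a + b) = φ a + φ b
  map_sub (a b : R) : φ (a - b) = φ a - φ b
  map_mul (a b : R) : φ (a * b) = φ a * φ b

theorem isArithmetic_ringHom [CommRing R] [CommRing S] (φ : R →+* S) : IsArithmetic φ :=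
  ⟨map_zero φ, map_one φ, map_add φ, map_sub φ, map_mul φ⟩

section Eval

variable [CommRing S] {φ : R → S} {y : S}

theorem value_nil : value φ y ⟨[]⟩ = 0 := rfl

theorem value_cons (c : R) (a : List R) : value φ y ⟨c :: a⟩ = φ c + y * value φ y ⟨a⟩ := rfl

theorem value_append (a b : List R) :
    value φ y ⟨a ++ b⟩ = value φ y ⟨a⟩ + y ^ a.length * value φ y ⟨b⟩ := by
  induction a with
  | nil => simp only [List.nil_append, value_nil, List.length_nil, pow_zero, one_mul, zero_add]
  | cons c a ih =>
    simp only [List.cons_append, value_cons, ih, List.length_cons]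
    ring

theorem value_eq_zero {a : Coeffs R} (ha : ∀ c ∈ a.toList, φ c = 0) : value φ y a = 0 := by
  obtain ⟨a⟩ := a
  induction a with
  | nil => rfl
  | cons c a ih =>
    rw [value_cons, ha c (List.mem_cons_self ..), ih fun c' h => ha c' (List.mem_cons_of_mem _ h),
      mul_zero, add_zero]

theorem map_value {S' : Type*} [CommRing S'] (ψ : S →+* S') (a : Coeffs R) :
    ψ (value φ y a) = value (ψ ∘ φ) (ψ y) a := by
  obtain ⟨a⟩ := a
  induction a with
  | nil => exact map_zero ψ
  | cons c a ih => rw [value_cons, map_add, map_mul, ih, value_cons, Function.comp]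

variable [Zero R] [One R] [Add R] [Sub R] [Mul R] (hφ : IsArithmetic φ)
include hφ

theorem value_addList (a b : List R) :
    value φ y ⟨addList a b⟩ = value φ y ⟨a⟩ + value φ y ⟨b⟩ := by
  induction a, b using addList.induct with
  | case1 => simp only [addList, value_nil, zero_add]
  | case2 => simp only [addList, value_nil, add_zero]
  | case3 c a d b ih =>
    simp only [addList, value_cons, hφ.map_add, ih]
    ring

theorem value_subList (a b : List R) :
    value φ y ⟨subList a b⟩ = value φ y ⟨a⟩ - value φ y ⟨b⟩ := by
  induction a, b using subList.induct with
  | case1 b =>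
    simp only [subList]
    induction b with
    | nil => simp only [List.map_nil, value_nil, sub_zero]
    | cons c b ih =>
      simp only [List.map_cons, value_cons, value_nil, hφ.map_sub, hφ.map_zero, ih]
      ring
  | case2 => simp only [subList, value_nil, sub_zero]
  | case3 c a d b ih =>
    simp only [subList, value_cons, hφ.map_sub, ih]
    ring

theorem value_map_mul_left (c : R) (a : List R) :
    value φ y ⟨a.map (c * ·)⟩ = φ c * value φ y ⟨a⟩ := by
  induction a with
  | nil => simp only [List.map_nil, value_nil, mul_zero]
  | cons d a ih =>
    simp only [List.map_cons, value_cons, hφ.map_mul, ih]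
    ring

theorem value_mulList (a b : List R) :
    value φ y ⟨mulList a b⟩ = value φ y ⟨a⟩ * value φ y ⟨b⟩ := by
  induction a with
  | nil => simp only [mulList, value_nil, zero_mul]
  | cons c a ih =>
    simp only [mulList, value_addList hφ, value_map_mul_left hφ, value_cons, hφ.map_zero, ih]
    ring

theorem IsArithmetic.value (y : S) : IsArithmetic (value φ y) where
  map_zero := rfl
  map_one := by
    change Coeffs.value φ y ⟨[1]⟩ = 1
    rw [value_cons, hφ.map_one, value_nil, mul_zero, add_zero]
  map_add a b := value_addList hφ a.toList b.toList
  map_sub a b := value_subList hφ a.toList b.toList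
  map_mul a b := value_mulList hφ a.toList b.toList

theorem value_pow (a : Coeffs R) (n : ℕ) : value φ y (a ^ n) = value φ y a ^ n := by
  induction n with
  | zero => exact (hφ.value y).map_one.trans (pow_zero _).symm
  | succ n ih => rw [pow_succ, ← ih]; exact (hφ.value y).map_mul _ _

theorem value_reduceCons {g : List R} (hg : y ^ g.length = value φ y ⟨g⟩) (c : R) (v : List R) :
    value φ y ⟨reduceCons g c v⟩ = φ c + y * value φ y ⟨v⟩ := by
  rw [reduceCons]
  split_ifs with hlen
  · rcases v.eq_nil_or_concat with rfl | ⟨v, d, rfl⟩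
    · simp only [value_addList hφ, value_map_mul_left hφ, value_cons, ← hg, ← hlen,
        List.dropLast_nil, List.getLastD_nil, hφ.map_zero, zero_mul, add_zero]
    · rw [value_addList hφ, value_map_mul_left hφ, ← hg, ← hlen]
      simp only [List.concat_eq_append, List.dropLast_concat, List.getLastD_concat,
        value_append, List.length_append, List.length_singleton, value_cons, value_nil]
      ring
  · rw [value_cons]

theorem value_reduce {g : Coeffs R} (hg : y ^ g.toList.length = value φ y g) (a : Coeffs R) :
    value φ y (reduce g a) = value φ y a := by
  obtain ⟨a⟩ := a
  induction a with
  | nil => rfl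
  | cons c a ih => exact (value_reduceCons hφ hg c _).trans (by rw [value_cons, ← ih]; rfl)

end Eval

end Coeffs

end Coefficients

section Polynomials

variable {A : Type*} [CommRing A]

/-- The numerator of the Belyi map in the coordinate `y = 2X`, scaled to be monic. -/
def numer (y : A) : A :=
  (y ^ 4 - 8 * y ^ 3 - 24 * y ^ 2 - 16 * y - 4) ^ 2 *
    (y ^ 4 - 8 * y ^ 3 - 18 * y ^ 2 - 16 * y - 4) *
    (y ^ 4 + 4 * y ^ 3 + 36 * y ^ 2 + 56 * y + 20) ^ 4 *
    (y ^ 6 - 18 * y ^ 5 - 24 * y ^ 4 - 8 * y ^ 3 + 36 * y ^ 2 + 24 * y + 16) ^ 4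

/-- The polynomial `r` in the coordinate `y = 2X`, scaled to have integral coefficients and without
its factor `27`. -/
def denom (y : A) : A :=
  (y + 2) ^ 8 * (y ^ 2 - 8 * y - 2) ^ 8 * (y ^ 2 + 2) ^ 4 * (3 * y ^ 2 + 4 * y + 2) ^ 8

/-- The solutions `y` of `numer y = -27 s denom y`: the fibre of the Belyi map over the point
`t = s / (1 + s)`. -/
def fibre (s : A) : Set A :=
  {y | numer y + 27 * s * denom y = 0}

theorem mem_fibre {s y : A} : y ∈ fibre s ↔ numer y + 27 * s * denom y = 0 := Iff.rfl

instance [DecidableEq A] (s y : A) : Decidable (y ∈ fibre s) :=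
  decidable_of_iff' _ mem_fibre

theorem map_numer {A' : Type*} [CommRing A'] (ψ : A →+* A') (y : A) :
    ψ (numer y) = numer (ψ y) := by
  simp only [numer, map_mul, map_pow, map_add, map_sub, map_ofNat]

theorem map_denom {A' : Type*} [CommRing A'] (ψ : A →+* A') (y : A) :
    ψ (denom y) = denom (ψ y) := by
  simp only [denom, map_mul, map_pow, map_add, map_ofNat, map_sub]

theorem map_mem_fibre {A' : Type*} [CommRing A'] (ψ : A →+* A') {s y : A} (hy : y ∈ fibre s) :
    ψ y ∈ fibre (ψ s) := by
  have := congrArg ψ (mem_fibre.1 hy)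
  simpa only [mem_fibre, map_add, map_mul, map_numer, map_denom, map_ofNat, map_zero] using this

theorem map_mem_fibre_iff {A' : Type*} [CommRing A'] {ψ : A →+* A'} (hψ : Function.Injective ψ)
    {s y : A} : ψ y ∈ fibre (ψ s) ↔ y ∈ fibre s := by
  refine ⟨fun h => hψ ?_, map_mem_fibre ψ⟩
  simpa only [mem_fibre, map_add, map_mul, map_numer, map_denom, map_ofNat, map_zero] using h

/-- The product of the distinct irreducible factors of `numer`. -/
def numerRad (y : A) : A :=
  (y ^ 4 - 8 * y ^ 3 - 24 * y ^ 2 - 16 * y - 4) * (y ^ 4 - 8 * y ^ 3 - 18 * y ^ 2 - 16 * y - 4) *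
    (y ^ 4 + 4 * y ^ 3 + 36 * y ^ 2 + 56 * y + 20) *
    (y ^ 6 - 18 * y ^ 5 - 24 * y ^ 4 - 8 * y ^ 3 + 36 * y ^ 2 + 24 * y + 16)

/-- The product of the distinct irreducible factors of `denom`. -/
def denomRad (y : A) : A :=
  (y + 2) * (y ^ 2 - 8 * y - 2) * (y ^ 2 + 2) * (3 * y ^ 2 + 4 * y + 2)

theorem exists_bezout (y : A) :
    ∃ u v : A, u * numerRad y + v * denomRad y = 2 ^ 23 * 3 ^ 9 := by
  refine ⟨2103053104 + 5736067152 * y + 6653246636 * y ^ 2 + 4029614264 * y ^ 3 +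
    2566789860 * y ^ 4 + 580791112 * y ^ 5 - 117035763 * y ^ 6,
    662657432576 + 5805885194240 * y + 25221086649344 * y ^ 2 + 67358890322304 * y ^ 3 +
    119052415691520 * y ^ 4 + 137189959275648 * y ^ 5 + 84934871138560 * y ^ 6 -
    12675999722816 * y ^ 7 - 81174408815360 * y ^ 8 - 80183456271152 * y ^ 9 -
    40927916561408 * y ^ 10 - 10488270781544 * y ^ 11 - 618874070256 * y ^ 12 +
    168372760320 * y ^ 13 + 7975571520 * y ^ 14 + 7603281128 * y ^ 15 - 1181899036 * y ^ 16 +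
    39011921 * y ^ 17, ?_⟩
  simp only [numerRad, denomRad]
  ring

/-- The polynomial whose square divides `numer - 27 * denom`: its roots are the points of
ramification index two over `s = -1`. -/
def ramif (y : A) : A :=
  (y ^ 3 + 9 * y ^ 2 + 6 * y + 2) * (y ^ 3 + 3 * y ^ 2 + 6 * y + 2) *
    (y ^ 6 - 12 * y ^ 5 + 6 * y ^ 4 + 16 * y ^ 3 - 132 * y ^ 2 - 240 * y - 152) *
    (y ^ 12 - 24 * y ^ 11 + 288 * y ^ 10 - 608 * y ^ 9 - 6840 * y ^ 8 - 17664 * y ^ 7 -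
      24864 * y ^ 6 - 23040 * y ^ 5 - 15216 * y ^ 4 - 8320 * y ^ 3 - 4224 * y ^ 2 - 1536 * y - 256)

theorem numer_sub_denom (y : A) :
    numer y - 27 * denom y =
      (y ^ 4 - 32 * y ^ 3 - 84 * y ^ 2 - 64 * y - 28) * ramif y ^ 2 := by
  simp only [numer, denom, ramif]
  ring

/-- The quotient of `numer` by its radical. -/
def numerCorad (y : A) : A :=
  (y ^ 4 - 8 * y ^ 3 - 24 * y ^ 2 - 16 * y - 4) *
    (y ^ 4 + 4 * y ^ 3 + 36 * y ^ 2 + 56 * y + 20) ^ 3 *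
    (y ^ 6 - 18 * y ^ 5 - 24 * y ^ 4 - 8 * y ^ 3 + 36 * y ^ 2 + 24 * y + 16) ^ 3

/-- The quotient of `denom` by its radical. -/
def denomCorad (y : A) : A :=
  (y + 2) ^ 7 * (y ^ 2 - 8 * y - 2) ^ 7 * (y ^ 2 + 2) ^ 3 * (3 * y ^ 2 + 4 * y + 2) ^ 7

theorem numerCorad_mul_numerRad (y : A) : numerCorad y * numerRad y = numer y := by
  simp only [numer, numerRad, numerCorad]
  ring

theorem denomCorad_mul_denomRad (y : A) : denomCorad y * denomRad y = denom y := by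
  simp only [denom, denomRad, denomCorad]
  ring

theorem eval_derivative_numer (y : A) :
    (derivative (numer X)).eval y = numerCorad y * (52 * y ^ 17 - 1480 * y ^ 16 + 8860 * y ^ 15 +
      13432 * y ^ 14 + 154208 * y ^ 13 - 695072 * y ^ 12 - 9893840 * y ^ 11 - 36896224 * y ^ 10 -
      71226752 * y ^ 9 - 76569856 * y ^ 8 - 32531648 * y ^ 7 + 29890688 * y ^ 6 +
      62067200 * y ^ 5 + 52758016 * y ^ 4 + 27289856 * y ^ 3 + 8936960 * y ^ 2 + 1721344 * y +
      149504) := by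
  simp only [numer, numerCorad, derivative_mul, derivative_pow, derivative_add, derivative_sub,
    derivative_X, derivative_ofNat, Nat.cast_ofNat, map_ofNat, eval_add, eval_sub, eval_mul,
    eval_pow, eval_X, eval_ofNat, eval_zero, eval_one]
  ring

theorem eval_derivative_denom (y : A) :
    (derivative (denom X)).eval y = denomCorad y * (144 * y ^ 6 - 560 * y ^ 5 - 2192 * y ^ 4 -
      3200 * y ^ 3 - 4480 * y ^ 2 - 3136 * y - 832) := by
  simp only [denom, denomCorad, derivative_mul, derivative_pow, derivative_add, derivative_sub,
    derivative_X, derivative_ofNat, Nat.cast_ofNat, map_ofNat, eval_add, eval_sub, eval_mul,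
    eval_pow, eval_X, eval_ofNat, eval_zero, eval_one]
  ring

theorem wronskian_numer_denom (y : A) :
    (derivative (numer X)).eval y * denom y - numer y * (derivative (denom X)).eval y =
      12 * (numerCorad y * denomCorad y * ramif y) := by
  rw [eval_derivative_numer, eval_derivative_denom, ← numerCorad_mul_numerRad,
    ← denomCorad_mul_denomRad]
  simp only [numerRad, denomRad, ramif]
  ring

/-- The polynomial whose roots are the points of `fibre s`. -/
noncomputable def fibrePoly (s : A) : A[X] :=
  numer X + C (27 * s) * denom X

theorem fibrePoly_monic (s : A) : (fibrePoly s).Monic := by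
  unfold fibrePoly numer denom
  monicity!

theorem fibrePoly_natDegree [Nontrivial A] (s : A) : (fibrePoly s).natDegree = 52 := by
  unfold fibrePoly numer denom
  compute_degree!

theorem eval_fibrePoly (s y : A) : (fibrePoly s).eval y = numer y + 27 * s * denom y := by
  have hn : (numer X : A[X]).eval y = numer y := by
    simpa only [coe_evalRingHom, eval_X] using map_numer (evalRingHom y) X
  have hd : (denom X : A[X]).eval y = denom y := by
    simpa only [coe_evalRingHom, eval_X] using map_denom (evalRingHom y) X
  rw [fibrePoly, eval_add, eval_mul, eval_C, hn, hd]

theorem isRoot_fibrePoly {s y : A} : (fibrePoly s).IsRoot y ↔ y ∈ fibre s := by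
  rw [IsRoot, eval_fibrePoly, mem_fibre]

theorem map_fibrePoly {A' : Type*} [CommRing A'] (ψ : A →+* A') (s : A) :
    (fibrePoly s).map ψ = fibrePoly (ψ s) := by
  rw [← coe_mapRingHom]
  simp only [fibrePoly, map_add, map_mul, map_numer, map_denom, coe_mapRingHom, map_X, map_C,
    map_ofNat]

section Domain

variable [IsDomain A] {s y : A}

theorem mem_roots_fibrePoly : y ∈ (fibrePoly s).roots ↔ y ∈ fibre s := by
  rw [mem_roots (fibrePoly_monic s).ne_zero, isRoot_fibrePoly]

theorem numer_eq_zero_iff : numer y = 0 ↔ numerRad y = 0 := by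
  simp only [numer, numerRad, mul_eq_zero, pow_eq_zero_iff, ne_eq, OfNat.ofNat_ne_zero,
    not_false_eq_true]

theorem denom_eq_zero_iff : denom y = 0 ↔ denomRad y = 0 := by
  simp only [denom, denomRad, mul_eq_zero, pow_eq_zero_iff, ne_eq, OfNat.ofNat_ne_zero,
    not_false_eq_true]

theorem numer_ne_zero_or_denom_ne_zero (h6 : (6 : A) ≠ 0) (y : A) : numer y ≠ 0 ∨ denom y ≠ 0 := by
  by_contra! h
  obtain ⟨u, v, huv⟩ := exists_bezout y
  rw [numer_eq_zero_iff.1 h.1, denom_eq_zero_iff.1 h.2] at huv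
  refine pow_ne_zero 23 h6 ?_
  linear_combination (-3 ^ 14) * huv

theorem denom_ne_zero (h6 : (6 : A) ≠ 0) (hy : y ∈ fibre s) : denom y ≠ 0 := fun h =>
  (numer_ne_zero_or_denom_ne_zero h6 y).elim
    (fun hn => hn (by linear_combination mem_fibre.1 hy - 27 * s * h)) (· h)

theorem numer_ne_zero (h6 : (6 : A) ≠ 0) (hs : s ≠ 0) (hy : y ∈ fibre s) : numer y ≠ 0 := by
  intro h
  have h27 : (27 : A) ≠ 0 := fun h27 => pow_ne_zero 3 h6 (by linear_combination 8 * h27)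
  have hd : denom y ≠ 0 := denom_ne_zero h6 hy
  rw [mem_fibre, h, zero_add] at hy
  exact mul_ne_zero (mul_ne_zero h27 hs) hd hy

/-- The Belyi map is ramified only over `s = 0, -1, ∞`. -/
theorem eval_derivative_fibrePoly_ne_zero (hs : 6 * s * (s + 1) ≠ 0) (hy : y ∈ fibre s) :
    (derivative (fibrePoly s)).eval y ≠ 0 := by
  intro h
  obtain ⟨⟨h6, hs0⟩, hs1⟩ : ((6 : A) ≠ 0 ∧ s ≠ 0) ∧ s + 1 ≠ 0 := by
    simpa only [mul_ne_zero_iff] using hs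
  have hcorad : numerCorad y * denomCorad y ≠ 0 :=
    mul_ne_zero (left_ne_zero_of_mul (numerCorad_mul_numerRad y ▸ numer_ne_zero h6 hs0 hy))
      (left_ne_zero_of_mul (denomCorad_mul_denomRad y ▸ denom_ne_zero h6 hy))
  have hderiv : (derivative (numer X)).eval y + 27 * s * (derivative (denom X)).eval y = 0 := by
    simpa only [fibrePoly, derivative_add, derivative_C_mul, eval_add, eval_mul, eval_C] using h
  have hramif : ramif y = 0 := by
    have : 6 ^ 2 * (numerCorad y * denomCorad y * ramif y) = 0 := by
      linear_combination 3 * denom y * hderiv - 3 * (derivative (denom X)).eval y * mem_fibre.1 hy -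
        3 * wronskian_numer_denom y
    exact (mul_eq_zero.1 ((mul_eq_zero.1 this).resolve_left (pow_ne_zero 2 h6))).resolve_left hcorad
  have : 6 ^ 3 * ((s + 1) * denom y) = 0 := by
    linear_combination 8 * mem_fibre.1 hy - 8 * numer_sub_denom y -
      8 * (y ^ 4 - 32 * y ^ 3 - 84 * y ^ 2 - 64 * y - 28) * ramif y * hramif
  exact mul_ne_zero (pow_ne_zero 3 h6) (mul_ne_zero hs1 (denom_ne_zero h6 hy)) this

end Domain

end Polynomials

section Correspondence

namespace Coeffs

/-- The coefficients of `a(x)` as a polynomial in `x` and `y`, read as a polynomial in `y`. -/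
def inner {R : Type*} (a : Coeffs R) : Coeffs (Coeffs R) := ⟨[a]⟩

/-- The coefficients of `a(y)` as a polynomial in `x` and `y`, read as a polynomial in `y`. -/
def outer {R : Type*} (a : Coeffs R) : Coeffs (Coeffs R) := ⟨a.toList.map fun c => ⟨[c]⟩⟩

theorem value_inner {R S : Type*} [CommRing S] {φ : R → S} {x y : S} (a : Coeffs R) :
    value (value φ x) y a.inner = value φ x a := by
  rw [inner, value_cons, value_nil, mul_zero, add_zero]

theorem value_outer {R S : Type*} [CommRing S] {φ : R → S} {x y : S} (a : Coeffs R) :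
    value (value φ x) y a.outer = value φ y a := by
  obtain ⟨a⟩ := a
  induction a with
  | nil => rfl
  | cons c a ih =>
    have : value (value φ x) y (outer ⟨c :: a⟩) =
        value φ x ⟨[c]⟩ + y * value (value φ x) y (outer ⟨a⟩) := rfl
    rw [this, ih, value_cons, value_nil, mul_zero, add_zero, ← value_cons]

end Coeffs

open Coeffs

/-- The coefficients of `numer`. -/
def numerCoeffs : Coeffs ℤ :=
  ⟨[-4, -16, -24, -8, 1]⟩ ^ 2 * ⟨[-4, -16, -18, -8, 1]⟩ * ⟨[20, 56, 36, 4, 1]⟩ ^ 4 *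
    ⟨[16, 24, 36, -8, -24, -18, 1]⟩ ^ 4

/-- The coefficients of `denom`. -/
def denomCoeffs : Coeffs ℤ :=
  ⟨[2, 1]⟩ ^ 8 * ⟨[-2, -8, 1]⟩ ^ 8 * ⟨[2, 0, 1]⟩ ^ 4 * ⟨[2, 4, 3]⟩ ^ 8

/-- The coefficients of the correspondence `corr`. -/
def corrCoeffs : Coeffs (Coeffs ℤ) :=
  ⟨[⟨[960, 2304, 2656, 1024, -48, -64, 8]⟩,
    ⟨[2304, 4672, 6272, 3136, 320, -176, 32]⟩,
    ⟨[2656, 6272, 10384, 7424, 2344, -160, 60]⟩,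
    ⟨[1024, 3136, 7424, 6784, 3584, 304, 64]⟩,
    ⟨[-48, 320, 2344, 3584, 2716, 560, 46]⟩,
    ⟨[-64, -176, -160, 304, 560, 340, 24]⟩,
    ⟨[8, 32, 60, 64, 46, 24, 9]⟩]⟩

/-- The coefficients of `numer x * denom y - denom x * numer y`. -/
def fibreProductCoeffs : Coeffs (Coeffs ℤ) :=
  numerCoeffs.inner * denomCoeffs.outer - denomCoeffs.inner * numerCoeffs.outer

/-- The value of a bivariate polynomial at `(2 ^ 128, 2 ^ 7680)`. The balanced digits of this number
are the coefficients, provided these are small and the degree in `x` is less than `60`. -/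
def kronecker (a : Coeffs (Coeffs ℤ)) : ℤ :=
  value (value id (2 ^ 128)) (2 ^ 7680) a

/-- The first `n` digits of `v` to base `b`, chosen from the interval `[-b / 2, b / 2)`. -/
def balancedDigits (b : ℕ) : ℕ → ℤ → List ℤ
  | 0, _ => []
  | n + 1, v => v.bmod b :: balancedDigits b n ((v - v.bmod b) / b)

/-- The coefficients of the quotient of `numer x * denom y - denom x * numer y` by `corr x y`,
found by Kronecker substitution. -/
def cofactorCoeffs : Coeffs (Coeffs ℤ) :=
  ⟨(balancedDigits (2 ^ 7680) 47 (kronecker fibreProductCoeffs / kronecker corrCoeffs)).map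
    fun v => ⟨balancedDigits (2 ^ 128) 47 v⟩⟩

set_option maxRecDepth 100000 in
theorem fibreProductCoeffs_sub_corrCoeffs_mul_cofactorCoeffs :
    ∀ a ∈ (fibreProductCoeffs - corrCoeffs * cofactorCoeffs).toList, ∀ c ∈ a.toList, c = 0 := by
  decide +kernel

variable {A : Type*} [CommRing A]

/-- The symmetric `(6, 6)`-correspondence on the line that splits off from the fibre product of the
Belyi map with itself: two points of a fibre correspond if and only if they are adjacent flags. -/
def corr (x y : A) : A := value (value Int.cast x) y corrCoeffs

/-- The complementary factor to `corr` in `numer x * denom y - denom x * numer y`. -/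
def cofactor (x y : A) : A := value (value Int.cast x) y cofactorCoeffs

theorem isArithmetic_intCast : IsArithmetic (Int.cast : ℤ → A) :=
  isArithmetic_ringHom (Int.castRingHom A)

theorem value_numerCoeffs (y : A) : value Int.cast y numerCoeffs = numer y := by
  have h := isArithmetic_intCast.value y
  simp only [numerCoeffs, numer, h.map_mul, value_pow isArithmetic_intCast, value_cons, value_nil]
  push_cast
  ring

theorem value_denomCoeffs (y : A) : value Int.cast y denomCoeffs = denom y := by
  have h := isArithmetic_intCast.value y
  simp only [denomCoeffs, denom, h.map_mul, value_pow isArithmetic_intCast, value_cons, value_nil]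
  push_cast
  ring

theorem corr_mul_cofactor (x y : A) :
    corr x y * cofactor x y = numer x * denom y - denom x * numer y := by
  have h := (isArithmetic_intCast.value x).value y
  have hzero : value (value Int.cast x) y (fibreProductCoeffs - corrCoeffs * cofactorCoeffs) = 0 :=
    value_eq_zero fun a ha => value_eq_zero fun c hc => by
      rw [fibreProductCoeffs_sub_corrCoeffs_mul_cofactorCoeffs a ha c hc, Int.cast_zero]
  rw [h.map_sub, h.map_mul, sub_eq_zero, fibreProductCoeffs] at hzero
  rw [corr, cofactor, ← hzero]
  simp only [h.map_sub, h.map_mul, value_inner, value_outer, value_numerCoeffs, value_denomCoeffs]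

theorem corr_comm (x y : A) : corr x y = corr y x := by
  simp only [corr, corrCoeffs, value_cons, value_nil]
  push_cast
  ring

theorem map_bivariate {A' : Type*} [CommRing A'] (ψ : A →+* A') (x y : A)
    (a : Coeffs (Coeffs ℤ)) :
    ψ (value (value Int.cast x) y a) = value (value Int.cast (ψ x)) (ψ y) a := by
  have hcast : ψ ∘ (Int.cast : ℤ → A) = Int.cast := funext (map_intCast ψ)
  have hvalue : ψ ∘ value Int.cast x = value Int.cast (ψ x) := funext fun a => by
    rw [Function.comp, map_value, hcast]
  rw [map_value, hvalue]

theorem map_corr {A' : Type*} [CommRing A'] (ψ : A →+* A') (x y : A) :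
    ψ (corr x y) = corr (ψ x) (ψ y) :=
  map_bivariate ψ x y corrCoeffs

theorem map_cofactor {A' : Type*} [CommRing A'] (ψ : A →+* A') (x y : A) :
    ψ (cofactor x y) = cofactor (ψ x) (ψ y) :=
  map_bivariate ψ x y cofactorCoeffs

/-- The graph on `A` whose edges are the points of the correspondence off the diagonal. -/
def corrGraph (A : Type*) [CommRing A] : SimpleGraph A where
  Adj x y := x ≠ y ∧ corr x y = 0
  symm := ⟨fun x y h => ⟨h.1.symm, by rw [corr_comm, h.2]⟩⟩
  loopless := ⟨fun _ h => h.1 rfl⟩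

theorem corrGraph_adj {x y : A} : (corrGraph A).Adj x y ↔ x ≠ y ∧ corr x y = 0 := Iff.rfl

instance [DecidableEq A] : DecidableRel (corrGraph A).Adj := fun _ _ =>
  decidable_of_iff' _ corrGraph_adj

theorem corrGraph_adj_smul {G : Type*} [Group G] [MulSemiringAction G A] (g : G) ⦃x y : A⦄
    (h : (corrGraph A).Adj x y) : (corrGraph A).Adj (g • x) (g • y) := by
  refine ⟨(MulAction.injective g).ne h.1, ?_⟩
  rw [← MulSemiringAction.toRingHom_apply, ← MulSemiringAction.toRingHom_apply, ← map_corr, h.2,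
    map_zero]

section Domain

variable [IsDomain A] {s x y : A}

theorem mem_fibre_of_corr_eq_zero (h6 : (6 : A) ≠ 0) (hx : x ∈ fibre s) (h : corr x y = 0) :
    y ∈ fibre s := by
  refine mem_fibre.2 ((mul_eq_zero.1 ?_).resolve_left (denom_ne_zero h6 hx))
  linear_combination corr_mul_cofactor x y - cofactor x y * h + denom y * mem_fibre.1 hx

/-- If both vanished, `y` would be a multiple root of `fibrePoly s`. -/
theorem corr_ne_zero_or_cofactor_ne_zero (hs : 6 * s * (s + 1) ≠ 0) (hx : x ∈ fibre s)
    (hy : y ∈ fibre s) : corr x y ≠ 0 ∨ cofactor x y ≠ 0 := by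
  by_contra! h
  have h6 : (6 : A) ≠ 0 := left_ne_zero_of_mul (left_ne_zero_of_mul hs)
  have hpoly : -C (denom x) * fibrePoly s = corr (C x) X * cofactor (C x) X := by
    have hfibre : C (numer x) = -C (27 * s) * C (denom x) := by
      rw [eq_neg_of_add_eq_zero_left (mem_fibre.1 hx), map_neg, map_mul, neg_mul]
    rw [corr_mul_cofactor, ← map_numer, ← map_denom, hfibre, fibrePoly]
    ring
  have hcorr : (corr (C x) X).eval y = 0 := by
    simpa only [coe_evalRingHom, eval_C, eval_X, h.1] using map_corr (evalRingHom y) (C x) X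
  have hcof : (cofactor (C x) X).eval y = 0 := by
    simpa only [coe_evalRingHom, eval_C, eval_X, h.2] using map_cofactor (evalRingHom y) (C x) X
  have hderiv := congrArg (fun f => (derivative f).eval y) hpoly
  simp only [derivative_mul, ← C_neg, derivative_C, zero_mul, zero_add, eval_add, eval_mul, eval_C,
    hcorr, hcof, mul_zero] at hderiv
  exact mul_ne_zero (neg_ne_zero.2 (denom_ne_zero h6 hx)) (eval_derivative_fibrePoly_ne_zero hs hy)
    hderiv

theorem nodup_roots_fibrePoly (hs : 6 * s * (s + 1) ≠ 0) : (fibrePoly s).roots.Nodup := by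
  classical
  refine Multiset.nodup_iff_count_le_one.2 fun y => not_lt.1 fun h => ?_
  rw [count_roots, one_lt_rootMultiplicity_iff_isRoot (fibrePoly_monic s).ne_zero] at h
  exact eval_derivative_fibrePoly_ne_zero hs (isRoot_fibrePoly.1 h.1) h.2

theorem finite_fibre (s : A) : (fibre s).Finite := by
  classical
  exact (fibrePoly s).roots.toFinset.finite_toSet.subset fun y hy => by
    simpa only [Finset.mem_coe, Multiset.mem_toFinset] using mem_roots_fibrePoly.2 hy

theorem ncard_fibre_le (s : A) : (fibre s).ncard ≤ 52 := by
  classical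
  have : fibre s = (fibrePoly s).roots.toFinset := Set.ext fun y => by
    rw [Finset.mem_coe, Multiset.mem_toFinset, mem_roots_fibrePoly]
  rw [this, Set.ncard_coe_finset, ← fibrePoly_natDegree s]
  exact (Multiset.toFinset_card_le _).trans (card_roots' _)

end Domain

section Reduction

variable [IsDomain A] {k : Type*} [CommRing k] [IsDomain k] (ρ : A →+* k) {s : A}
  (hsplit : (fibrePoly s).Splits) (hs : 6 * ρ s * (ρ s + 1) ≠ 0)

include hsplit in
theorem roots_fibrePoly_map : (fibrePoly (ρ s)).roots = (fibrePoly s).roots.map ρ := by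
  rw [← map_fibrePoly ρ s]
  exact hsplit.roots_map_of_ne_zero ((fibrePoly_monic s).map ρ).ne_zero

include hsplit hs in
theorem bijOn_fibre : Set.BijOn ρ (fibre s) (fibre (ρ s)) := by
  refine ⟨fun x hx => map_mem_fibre ρ hx, fun x hx y hy hxy => ?_, fun z hz => ?_⟩
  · have := roots_fibrePoly_map ρ hsplit ▸ nodup_roots_fibrePoly hs
    exact Multiset.inj_on_of_nodup_map this x (mem_roots_fibrePoly.2 hx) y
      (mem_roots_fibrePoly.2 hy) hxy
  · rw [← mem_roots_fibrePoly, roots_fibrePoly_map ρ hsplit, Multiset.mem_map] at hz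
    obtain ⟨y, hy, rfl⟩ := hz
    exact ⟨y, mem_roots_fibrePoly.1 hy, rfl⟩

include hs in
theorem corr_map_eq_zero_iff {x y : A} (hx : x ∈ fibre s) (hy : y ∈ fibre s) :
    corr (ρ x) (ρ y) = 0 ↔ corr x y = 0 := by
  refine ⟨fun h => ?_, fun h => by rw [← map_corr, h, map_zero]⟩
  have hprod : corr x y * cofactor x y = 0 := by
    rw [corr_mul_cofactor]
    linear_combination denom y * mem_fibre.1 hx - denom x * mem_fibre.1 hy
  refine (mul_eq_zero.1 hprod).resolve_right fun hcof => ?_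
  refine (corr_ne_zero_or_cofactor_ne_zero hs (map_mem_fibre ρ hx) (map_mem_fibre ρ hy)).elim
    (· h) (· ?_)
  rw [← map_cofactor, hcof, map_zero]

include hsplit hs in
theorem corrGraph_adj_map_iff {x y : A} (hx : x ∈ fibre s) (hy : y ∈ fibre s) :
    (corrGraph k).Adj (ρ x) (ρ y) ↔ (corrGraph A).Adj x y := by
  rw [corrGraph_adj, corrGraph_adj, corr_map_eq_zero_iff ρ hs hx hy, ne_eq, ne_eq,
    (bijOn_fibre ρ hsplit hs).injOn.eq_iff hx hy]

include hsplit hs in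
theorem exists_lift {F : Type*} [Field F] [Algebra F k] {s₀ : F} (hs₀ : ρ s = algebraMap F k s₀) :
    ∃ e : (corrGraph F).induce (fibre s₀) ↪g corrGraph A,
      ∀ x, e x ∈ fibre s ∧ ρ (e x) = algebraMap F k x := by
  have hmem (x : fibre s₀) : algebraMap F k x ∈ fibre (ρ s) := hs₀ ▸ map_mem_fibre _ x.2
  choose lift hlift using fun x => (bijOn_fibre ρ hsplit hs).surjOn (hmem x)
  refine ⟨⟨⟨lift, fun x y hxy => ?_⟩, fun {x y} => ?_⟩, hlift⟩
  · exact Subtype.ext ((algebraMap F k).injective (by rw [← (hlift x).2, ← (hlift y).2, hxy]))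
  · change (corrGraph A).Adj (lift x) (lift y) ↔ (corrGraph F).Adj x y
    rw [← corrGraph_adj_map_iff ρ hsplit hs (hlift x).1 (hlift y).1, (hlift x).2, (hlift y).2,
      corrGraph_adj, corrGraph_adj, ← map_corr, map_eq_zero, (algebraMap F k).injective.ne_iff]

end Reduction

end Correspondence

section GenericFibre

variable {B G : Type*} [CommRing B] [Algebra ℤ[X] B] [Group G] [MulSemiringAction G B]

/-- The fibre over the generic point, in an extension `B` of the coordinate ring `ℤ[X]` of the
line. -/
abbrev genericFibre (B : Type*) [CommRing B] [Algebra ℤ[X] B] : Set B :=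
  fibre (algebraMap ℤ[X] B X)

theorem smul_mem_genericFibre [SMulCommClass G ℤ[X] B] (g : G) {v : B} (hv : v ∈ genericFibre B) :
    g • v ∈ genericFibre B := by
  have := map_mem_fibre (MulSemiringAction.toRingHom G B g) hv
  rwa [MulSemiringAction.toRingHom_apply, MulSemiringAction.toRingHom_apply, smul_algebraMap]
    at this

theorem mem_genericFibre_of_adj [IsDomain B] [FaithfulSMul ℤ[X] B] {v w : B}
    (hv : v ∈ genericFibre B) (h : (corrGraph B).Adj v w) : w ∈ genericFibre B := by
  refine mem_fibre_of_corr_eq_zero ?_ hv h.2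
  rw [← map_ofNat (algebraMap ℤ[X] B) 6]
  exact (map_ne_zero_iff _ (FaithfulSMul.algebraMap_injective ℤ[X] B)).2 (OfNat.ofNat_ne_zero 6)

/-- The reduction `ρ` into a field of characteristic `l` specializes the parameter to `s₀`, and
`σ` induces the `l`-th power map on it. -/
structure IsFrobenius {l : ℕ} {k : Type*} [Field k] [Algebra (ZMod l) k] (ρ : B →+* k) (σ : G)
    (s₀ : ZMod l) : Prop where
  map_parameter : ρ (algebraMap ℤ[X] B X) = algebraMap (ZMod l) k s₀
  map_smul (b : B) : ρ (σ • b) = ρ b ^ l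

universe v in
theorem exists_isFrobenius {B : Type v} {G : Type*} [CommRing B] [Algebra ℤ[X] B]
    [FaithfulSMul ℤ[X] B] [Group G] [Finite G] [MulSemiringAction G B] [SMulCommClass G ℤ[X] B]
    [Algebra.IsInvariant ℤ[X] B G] {l : ℕ} [Fact l.Prime] (s₀ : ZMod l) :
    ∃ (k : Type v) (_ : Field k) (_ : Algebra (ZMod l) k) (ρ : B →+* k) (σ : G),
      IsFrobenius ρ σ s₀ := by
  obtain ⟨k, hk, halg, ρ, σ, hρ, hσ⟩ :=
    exists_frobenius (B := B) (G := G) (eval₂RingHom (Int.castRingHom (ZMod l)) s₀)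
  exact ⟨k, hk, halg, ρ, σ, by rw [hρ, coe_eval₂RingHom, eval₂_X], hσ⟩

namespace IsFrobenius

variable {l : ℕ} {k : Type*} [Field k] [Algebra (ZMod l) k] {ρ : B →+* k} {σ : G} {s₀ : ZMod l}
  (h : IsFrobenius ρ σ s₀)
include h

theorem map_pow_smul (i : ℕ) (b : B) : ρ (σ ^ i • b) = ρ b ^ l ^ i := by
  induction i with
  | zero => simp only [pow_zero, one_smul, pow_one]
  | succ i ih => rw [pow_succ', mul_smul, h.map_smul, ih, ← pow_mul, pow_succ]

variable [Fact l.Prime] (hs₀ : 6 * s₀ * (s₀ + 1) ≠ 0)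
include hs₀

theorem map_parameter_ne_zero :
    6 * ρ (algebraMap ℤ[X] B X) * (ρ (algebraMap ℤ[X] B X) + 1) ≠ 0 := by
  rw [h.map_parameter]
  simpa only [map_mul, map_add, map_ofNat, map_one] using
    (map_ne_zero_iff _ (algebraMap (ZMod l) k).injective).2 hs₀

variable [IsDomain B] (hsplit : (fibrePoly (algebraMap ℤ[X] B X)).Splits)
include hsplit

theorem smul_eq_self_iff [SMulCommClass G ℤ[X] B] {v : B} (hv : v ∈ genericFibre B) :
    σ • v = v ↔ ρ v ^ l = ρ v := by
  rw [← h.map_smul, (bijOn_fibre ρ hsplit (h.map_parameter_ne_zero hs₀)).injOn.eq_iff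
    (smul_mem_genericFibre σ hv) hv]

theorem exists_embedding [SMulCommClass G ℤ[X] B] :
    ∃ e : (corrGraph (ZMod l)).induce (fibre s₀) ↪g corrGraph B,
      (∀ x, e x ∈ genericFibre B ∧ ρ (e x) = algebraMap (ZMod l) k x) ∧
      ∀ v ∈ genericFibre B, σ • v = v ↔ v ∈ Set.range e := by
  have hs := h.map_parameter_ne_zero hs₀
  obtain ⟨e, he⟩ := exists_lift ρ hsplit hs h.map_parameter
  refine ⟨e, he, fun v hv => ?_⟩
  rw [h.smul_eq_self_iff hs₀ hsplit hv]
  constructor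
  · intro hpow
    have : CharP k l := charP_of_injective_algebraMap (algebraMap (ZMod l) k).injective l
    rw [← Subfield.mem_bot_iff_pow_eq_self, ← ZMod.fieldRange_castHom_eq_bot] at hpow
    obtain ⟨c, hc⟩ := hpow
    rw [Subsingleton.elim (ZMod.castHom _ k) (algebraMap (ZMod l) k)] at hc
    have hmem : c ∈ fibre s₀ := by
      rw [← map_mem_fibre_iff (algebraMap (ZMod l) k).injective, hc, ← h.map_parameter]
      exact map_mem_fibre ρ hv
    exact ⟨⟨c, hmem⟩, (bijOn_fibre ρ hsplit hs).injOn (he _).1 hv ((he _).2.trans hc)⟩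
  · rintro ⟨x, rfl⟩
    rw [(he x).2, ← map_pow, ZMod.pow_card]

end IsFrobenius

end GenericFibre

section Places

instance fact_prime_seven : Fact (Nat.Prime 7) := ⟨by norm_num⟩
instance fact_prime_eleven : Fact (Nat.Prime 11) := ⟨by norm_num⟩
instance fact_prime_seventyThree : Fact (Nat.Prime 73) := ⟨by norm_num⟩
instance fact_prime_fiveHundredSeventyOne : Fact (Nat.Prime 571) := ⟨by norm_num⟩

section SexticModEleven

open Coeffs

/-- The polynomial `g` of degree five for which `X ^ 6 - g` is proportional to `corr 0 X` over
`ZMod 11`. -/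
def sexticTail : Coeffs (ZMod 11) := ⟨[1, 9, 9, 4, 6, 8]⟩

/-- The residue of `X ^ 11 ^ i` modulo `X ^ 6 - sexticTail`. -/
def frobeniusResidue : ℕ → Coeffs (ZMod 11)
  | 0 => ⟨[0, 1]⟩
  | i + 1 => reduce sexticTail (frobeniusResidue i ^ 11)

theorem exists_inverse_frobeniusResidue_sub {i : ℕ} (hi : 0 < i) (hi' : i < 4) :
    ∃ u, (reduce sexticTail (u * (frobeniusResidue i - ⟨[0, 1]⟩))).toList = [1, 0, 0, 0, 0, 0] := by
  interval_cases i
  · exact ⟨⟨[9, 6, 9, 6, 2, 1]⟩, by decide +kernel⟩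
  · exact ⟨⟨[1, 6, 8, 5, 5, 7]⟩, by decide +kernel⟩
  · exact ⟨⟨[4, 8, 1, 9, 10, 0]⟩, by decide +kernel⟩

variable {k : Type*} [Field k] [Algebra (ZMod 11) k] {z : k}

theorem pow_six_eq_value_sexticTail (hz : corr 0 z = 0) :
    z ^ 6 = value (algebraMap (ZMod 11) k) z sexticTail := by
  have h11 : (11 : k) = 0 := by
    rw [← map_ofNat (algebraMap (ZMod 11) k) 11, show (OfNat.ofNat 11 : ZMod 11) = 0 from rfl,
      map_zero]
  simp only [corr, corrCoeffs, value_cons, value_nil] at hz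
  push_cast at hz
  simp only [sexticTail, value_cons, value_nil, map_ofNat, map_one]
  linear_combination 7 * hz -
    (611 + 1467 * z + 1691 * z ^ 2 + 652 * z ^ 3 - 30 * z ^ 4 - 40 * z ^ 5 + 5 * z ^ 6) * h11

theorem value_X : value (algebraMap (ZMod 11) k) z ⟨[0, 1]⟩ = z := by
  rw [value_cons, value_cons, value_nil, map_zero, map_one, mul_zero, add_zero, mul_one, zero_add]

theorem value_frobeniusResidue (hz : corr 0 z = 0) (i : ℕ) :
    value (algebraMap (ZMod 11) k) z (frobeniusResidue i) = z ^ 11 ^ i := by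
  have hφ := isArithmetic_ringHom (algebraMap (ZMod 11) k)
  induction i with
  | zero => rw [frobeniusResidue, value_X, pow_zero, pow_one]
  | succ i ih =>
    rw [frobeniusResidue, value_reduce hφ (pow_six_eq_value_sexticTail hz), value_pow hφ, ih,
      ← pow_mul, pow_succ]

theorem pow_eleven_pow_ne_self (hz : corr 0 z = 0) {i : ℕ} (hi : 0 < i) (hi' : i < 4) :
    z ^ 11 ^ i ≠ z := by
  have hφ := isArithmetic_ringHom (algebraMap (ZMod 11) k)
  obtain ⟨u, hu⟩ := exists_inverse_frobeniusResidue_sub hi hi'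
  have hone : value (algebraMap (ZMod 11) k) z ⟨[1, 0, 0, 0, 0, 0]⟩ = 1 := by
    simp only [value_cons, value_nil, map_zero, map_one, mul_zero, add_zero]
  rw [← hu, value_reduce hφ (pow_six_eq_value_sexticTail hz), (hφ.value z).map_mul,
    (hφ.value z).map_sub, value_frobeniusResidue hz, value_X] at hone
  exact sub_ne_zero.1 (right_ne_zero_of_mul_eq_one hone)

end SexticModEleven

variable {B G : Type*} [CommRing B] [IsDomain B] [Algebra ℤ[X] B] [FaithfulSMul ℤ[X] B] [Group G]
  [Finite G] [MulSemiringAction G B] [SMulCommClass G ℤ[X] B] [Algebra.IsInvariant ℤ[X] B G]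
  (hsplit : (fibrePoly (algebraMap ℤ[X] B X)).Splits)

include hsplit in
theorem exists_fixed_vertex_mod_eleven :
    ∃ (σ : G) (a : B), a ∈ genericFibre B ∧ σ • a = a ∧
      ∀ b ∈ (corrGraph B).neighborSet a, ∀ i, 0 < i → i < 4 → σ ^ i • b ≠ b := by
  obtain ⟨k, _, _, ρ, σ, h⟩ := exists_isFrobenius (B := B) (G := G) (5 : ZMod 11)
  obtain ⟨e, he, hfix⟩ := h.exists_embedding (by decide) hsplit
  let a : fibre (5 : ZMod 11) := ⟨0, by decide +kernel⟩
  refine ⟨σ, e a, (he a).1, (hfix _ (he a).1).2 ⟨a, rfl⟩, fun b hb i hi hi' hσb => ?_⟩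
  have hz : corr 0 (ρ b) = 0 := by
    have ha : ρ (e a) = 0 := (he a).2.trans (map_zero _)
    rw [← ha, ← map_corr, hb.2, map_zero, ha]
  exact pow_eleven_pow_ne_self hz hi hi' (by rw [← h.map_pow_smul, hσb])

include hsplit in
theorem exists_fixed_gallery_mod_seven :
    ∃ (σ : G) (a b c : B), a ∈ genericFibre B ∧ (corrGraph B).Adj a b ∧
      c ∈ forward (corrGraph B) a b ∧ σ • a = a ∧ σ • b = b ∧ σ • c = c ∧
      ∀ d ∈ forward (corrGraph B) b c, σ • d ≠ d := by
  obtain ⟨_, _, _, _, σ, h⟩ := exists_isFrobenius (B := B) (G := G) (2 : ZMod 7)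
  obtain ⟨e, he, hfix⟩ := h.exists_embedding (by decide) hsplit
  have fixed (x) : σ • e x = e x := (hfix _ (he x).1).2 ⟨x, rfl⟩
  let a : fibre (2 : ZMod 7) := ⟨3, by decide +kernel⟩
  let b : fibre (2 : ZMod 7) := ⟨1, by decide +kernel⟩
  let c : fibre (2 : ZMod 7) := ⟨4, by decide +kernel⟩
  refine ⟨σ, e a, e b, e c, (he a).1, e.map_adj_iff.2 (by decide +kernel),
    (embedding_mem_forward_iff e).2 (by decide +kernel), fixed a, fixed b, fixed c, ?_⟩
  intro d hd hσd
  have hdV := mem_genericFibre_of_adj (he c).1 (mem_forward.1 hd).1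
  obtain ⟨z, rfl⟩ := (hfix d hdV).1 hσd
  have : ∀ z, z ∉ forward ((corrGraph (ZMod 7)).induce (fibre 2)) b c := by decide +kernel
  exact this z ((embedding_mem_forward_iff e).1 hd)

include hsplit in
theorem exists_fixed_gallery_mod_seventyThree :
    ∃ (σ : G) (a b c d f u : B), a ∈ genericFibre B ∧ (corrGraph B).Adj a b ∧
      c ∈ forward (corrGraph B) a b ∧ d ∈ forward (corrGraph B) b c ∧
      f ∈ forward (corrGraph B) c d ∧ u ∈ (corrGraph B).commonNeighbors b c ∧
      σ • a = a ∧ σ • b = b ∧ σ • c = c ∧ σ • d = d ∧ σ • f = f ∧ σ • u = u ∧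
      ∀ w ∈ (corrGraph B).commonNeighbors c d, σ • w ≠ w := by
  obtain ⟨_, _, _, _, σ, h⟩ := exists_isFrobenius (B := B) (G := G) (58 : ZMod 73)
  obtain ⟨e, he, hfix⟩ := h.exists_embedding (by decide) hsplit
  have fixed (x) : σ • e x = e x := (hfix _ (he x).1).2 ⟨x, rfl⟩
  let a : fibre (58 : ZMod 73) := ⟨23, by decide +kernel⟩
  let b : fibre (58 : ZMod 73) := ⟨43, by decide +kernel⟩
  let c : fibre (58 : ZMod 73) := ⟨59, by decide +kernel⟩
  let d : fibre (58 : ZMod 73) := ⟨24, by decide +kernel⟩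
  let f : fibre (58 : ZMod 73) := ⟨68, by decide +kernel⟩
  let u : fibre (58 : ZMod 73) := ⟨15, by decide +kernel⟩
  refine ⟨σ, e a, e b, e c, e d, e f, e u, (he a).1, e.map_adj_iff.2 (by decide +kernel),
    (embedding_mem_forward_iff e).2 (by decide +kernel),
    (embedding_mem_forward_iff e).2 (by decide +kernel),
    (embedding_mem_forward_iff e).2 (by decide +kernel),
    (embedding_mem_commonNeighbors_iff e).2 (by decide +kernel),
    fixed a, fixed b, fixed c, fixed d, fixed f, fixed u, ?_⟩
  intro w hw hσw
  have hwV := mem_genericFibre_of_adj (he c).1 hw.1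
  obtain ⟨z, rfl⟩ := (hfix w hwV).1 hσw
  have : ∀ z, z ∉ ((corrGraph (ZMod 73)).induce (fibre 58)).commonNeighbors c d := by
    decide +kernel
  exact this z ((embedding_mem_commonNeighbors_iff e).1 hw)

end Places

section Flags

/-- The differences between incident lines and points of the projective plane of order three, whose
points and lines are numbered by `ZMod 13` (Singer's perfect difference set). -/
def singerSet : Fin 4 → ZMod 13 := ![0, 1, 3, 9]

/-- The flags of the projective plane of order three: `(x, i)` consists of the point `x` and the
line `x + singerSet i`. -/
abbrev Flag := ZMod 13 × Fin 4

/-- The line of a flag. -/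
def Flag.line (u : Flag) : ZMod 13 := u.1 + singerSet u.2

/-- Two flags are adjacent if they differ in exactly one of point and line. -/
def flagGraph : SimpleGraph Flag where
  Adj u v := u ≠ v ∧ (u.1 = v.1 ∨ u.line = v.line)
  symm := ⟨fun _ _ h => ⟨h.1.symm, h.2.imp Eq.symm Eq.symm⟩⟩
  loopless := ⟨fun _ h => h.1 rfl⟩

instance : DecidableRel flagGraph.Adj := fun u v =>
  inferInstanceAs (Decidable (u ≠ v ∧ (u.1 = v.1 ∨ u.line = v.line)))

theorem flagGraph_eq_or_adj_iff {u v : Flag} :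
    u = v ∨ flagGraph.Adj u v ↔ u.1 = v.1 ∨ u.line = v.line := by
  by_cases h : u = v
  · simp only [h, true_or]
  · simp only [flagGraph, h, ne_eq, not_false_eq_true, true_and, false_or]

/-- The point `x` lies on the line `y`. -/
def Incident (x y : ZMod 13) : Prop := y - x ∈ ({0, 1, 3, 9} : Finset (ZMod 13))

theorem incident_iff : ∀ x y : ZMod 13, Incident x y ↔ ∃ i, x + singerSet i = y := by
  unfold Incident
  decide

theorem incident_line (u : Flag) : Incident u.1 u.line := (incident_iff _ _).2 ⟨u.2, rfl⟩

/-- The point of one of the flags lies on the line of the other; otherwise the flags are in general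
position. -/
def NonOpposite (u v : Flag) : Prop := Incident u.1 v.line ∨ Incident v.1 u.line

instance : DecidableRel NonOpposite := fun _ _ =>
  inferInstanceAs (Decidable
    (_ ∈ ({0, 1, 3, 9} : Finset (ZMod 13)) ∨ _ ∈ ({0, 1, 3, 9} : Finset (ZMod 13))))

theorem nonOpposite_iff {u v : Flag} :
    NonOpposite u v ↔ ∃ z, (u = z ∨ flagGraph.Adj u z) ∧ (z = v ∨ flagGraph.Adj z v) := by
  simp only [flagGraph_eq_or_adj_iff]
  constructor
  · rintro (h | h) <;> obtain ⟨i, hi⟩ := (incident_iff _ _).1 h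
    · exact ⟨(u.1, i), .inl rfl, .inr hi⟩
    · exact ⟨(v.1, i), .inr hi.symm, .inl rfl⟩
  · rintro ⟨z, hu | hu, hv | hv⟩
    · exact .inl (hu.trans hv ▸ incident_line v)
    · exact .inl (hu ▸ hv ▸ incident_line z)
    · exact .inr (hu ▸ hv ▸ incident_line z)
    · exact .inl ((hu.trans hv) ▸ incident_line u)

theorem nonOpposite_embedding_iff (π : flagGraph ↪g flagGraph) {u v : Flag} :
    NonOpposite (π u) (π v) ↔ NonOpposite u v := by
  rw [nonOpposite_iff, nonOpposite_iff, (Finite.surjective_of_injective π.injective).exists]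
  simp only [π.map_adj_iff, π.injective.eq_iff]

/-- The flags that are determined by their opposition relations with the flags in `F`. -/
def resolved (F : Finset Flag) : Finset Flag :=
  {v | ∀ w, (∀ u ∈ F, NonOpposite u w ↔ NonOpposite u v) → w = v}

theorem embedding_eq_self_of_mem_resolved {π : flagGraph ↪g flagGraph} {F : Finset Flag}
    (hF : ∀ u ∈ F, π u = u) : ∀ v ∈ resolved F, π v = v := by
  intro v hv
  refine (Finset.mem_filter.1 hv).2 (π v) fun u hu => ?_
  conv_lhs => rw [← hF u hu]
  exact nonOpposite_embedding_iff π

/-- The flags of a configuration as in `frames`. -/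
def baseFrame : Finset Flag := {(0, 0), (0, 1), (1, 0), (1, 1), (5, 3), (1, 2)}

set_option maxRecDepth 100000 in
theorem mem_resolved_baseFrame : ∀ u, u ∈ resolved (resolved (resolved baseFrame)) := by
  decide +kernel

theorem embedding_eq_self {π : flagGraph ↪g flagGraph} (h : ∀ u ∈ baseFrame, π u = u) (u : Flag) :
    π u = u :=
  embedding_eq_self_of_mem_resolved (embedding_eq_self_of_mem_resolved
    (embedding_eq_self_of_mem_resolved h)) u (mem_resolved_baseFrame u)

/-- The fibre over `39` in `ZMod 571`, labelled by the flags. -/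
def flagRoot (u : Flag) : ZMod 571 :=
  (![![1, 124, 190, 235], ![20, 526, 143, 305], ![323, 151, 15, 201], ![335, 159, 525, 54],
    ![73, 291, 32, 184], ![7, 133, 59, 404], ![360, 466, 435, 402], ![425, 63, 142, 254],
    ![270, 469, 452, 38], ![176, 476, 391, 509], ![386, 430, 363, 392], ![384, 76, 410, 240],
    ![287, 529, 123, 346]] : Fin 13 → Fin 4 → ZMod 571) u.1 u.2

theorem flagRoot_mem_fibre : ∀ u, flagRoot u ∈ fibre (39 : ZMod 571) := by
  decide +kernel

theorem flagRoot_injective : Function.Injective flagRoot := by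
  decide +kernel

theorem corrGraph_adj_flagRoot_iff :
    ∀ u v, (corrGraph (ZMod 571)).Adj (flagRoot u) (flagRoot v) ↔ flagGraph.Adj u v := by
  decide +kernel

/-- The labelling `flagRoot` as an embedding of graphs. -/
def flagEmbedding : flagGraph ↪g (corrGraph (ZMod 571)).induce (fibre 39) where
  toFun u := ⟨flagRoot u, flagRoot_mem_fibre u⟩
  inj' _ _ h := flagRoot_injective (congrArg Subtype.val h)
  map_rel_iff' := corrGraph_adj_flagRoot_iff _ _

end Flags

section CardGroup

variable {B G : Type*} [CommRing B] [Algebra ℤ[X] B]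

theorem embedding_mem_frames (e : flagGraph ↪g corrGraph B) (he : Set.range e = genericFibre B) :
    (((((e (0, 0), e (0, 1)), e (1, 0)), e (1, 1)), e (5, 3)), e (1, 2)) ∈
      frames (corrGraph B) (genericFibre B) :=
  ⟨⟨⟨⟨⟨he ▸ Set.mem_range_self _, e.map_adj_iff.2 (by decide)⟩,
    (embedding_mem_forward_iff e).2 (by decide)⟩, (embedding_mem_forward_iff e).2 (by decide)⟩,
    (embedding_mem_commonNeighbors_iff e).2 (by decide)⟩,
    (embedding_mem_commonNeighbors_iff e).2 (by decide)⟩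

theorem ncard_image_embedding {W : Type*} {Γ : SimpleGraph W} (e : flagGraph ↪g Γ) (S : Set Flag)
    [DecidablePred (· ∈ S)] {n : ℕ} (h : S.toFinset.card = n) : (e '' S).ncard = n := by
  rw [Set.ncard_image_of_injective _ e.injective, Set.ncard_eq_toFinset_card', h]

theorem ncard_genericFibre {e : flagGraph ↪g corrGraph B} (he : Set.range e = genericFibre B) :
    (genericFibre B).ncard = 52 := by
  rw [← he, ← Set.image_univ, ncard_image_embedding _ Set.univ (n := 52) (by decide +kernel)]

theorem eq_one_of_smul_frame_eq_self [Group G] [MulSemiringAction G B] [SMulCommClass G ℤ[X] B]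
    {e : flagGraph ↪g corrGraph B} (he : Set.range e = genericFibre B)
    (hfaith : ∀ g : G, (∀ v ∈ genericFibre B, g • v = v) → g = 1)
    {g : G} (hg : g • (((((e (0, 0), e (0, 1)), e (1, 0)), e (1, 1)), e (5, 3)), e (1, 2)) =
      (((((e (0, 0), e (0, 1)), e (1, 0)), e (1, 1)), e (5, 3)), e (1, 2))) : g = 1 := by
  have hbase : ∀ u ∈ baseFrame, g • e u = e u := by
    simpa only [baseFrame, Finset.forall_mem_insert, Finset.mem_singleton, forall_eq, Prod.smul_mk,
      Prod.mk.injEq, and_assoc] using hg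
  have hmem (u : Flag) : g • e u ∈ Set.range e :=
    he ▸ smul_mem_genericFibre g (he ▸ Set.mem_range_self u)
  choose π hπ using hmem
  let π' : flagGraph ↪g flagGraph :=
    { toFun := π
      inj' := fun u v h => e.injective <| MulAction.injective g <| by
        simpa only [hπ] using congrArg e h
      map_rel_iff' := fun {u v} => by
        change flagGraph.Adj (π u) (π v) ↔ _
        rw [← e.map_adj_iff, hπ, hπ, adj_smul_iff corrGraph_adj_smul, e.map_adj_iff] }
  have hfix : ∀ u, π u = u := embedding_eq_self (π := π') fun u hu =>
    e.injective ((hπ u).trans (hbase u hu))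
  refine hfaith g fun v hv => ?_
  obtain ⟨u, rfl⟩ := he.symm ▸ hv
  rw [← hπ, hfix]

variable [IsDomain B] [FaithfulSMul ℤ[X] B] [Group G] [MulSemiringAction G B]
  [SMulCommClass G ℤ[X] B]

theorem exists_flagGraph_embedding [Finite G] [Algebra.IsInvariant ℤ[X] B G]
    (hsplit : (fibrePoly (algebraMap ℤ[X] B X)).Splits) :
    ∃ e : flagGraph ↪g corrGraph B, Set.range e = genericFibre B := by
  obtain ⟨k, _, _, ρ, σ, h⟩ := exists_isFrobenius (B := B) (G := G) (39 : ZMod 571)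
  obtain ⟨e, he, -⟩ := h.exists_embedding (by decide) hsplit
  refine ⟨e.comp flagEmbedding, Set.eq_of_subset_of_ncard_le ?_ ?_ (finite_fibre _)⟩
  · rintro _ ⟨u, rfl⟩
    exact (he _).1
  · rw [← Set.image_univ, ncard_image_embedding _ Set.univ (n := 52) (by decide +kernel)]
    exact ncard_fibre_le _

variable {e : flagGraph ↪g corrGraph B} (he : Set.range e = genericFibre B)
include he

theorem neighborSet_subset_range (u : Flag) : (corrGraph B).neighborSet (e u) ⊆ Set.range e :=
  fun _ hw => he ▸ mem_genericFibre_of_adj (he ▸ Set.mem_range_self u) hw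

variable [Finite G] [Algebra.IsInvariant ℤ[X] B G]
  (hsplit : (fibrePoly (algebraMap ℤ[X] B X)).Splits)
include hsplit

theorem transitiveOn_galleries₂ (h : TransitiveOn G (genericFibre B)) :
    TransitiveOn G (galleries₂ (corrGraph B) (genericFibre B)) ∧
      (galleries₂ (corrGraph B) (genericFibre B)).ncard = (genericFibre B).ncard * 6 := by
  obtain ⟨σ, a, ha, hσ, hfree⟩ := exists_fixed_vertex_mod_eleven (G := G) hsplit
  have hT : Equivariant G (corrGraph B).neighborSet := fun g _ _ h => corrGraph_adj_smul g h
  refine h.extend (m := 4) hT (embedding_mem_frames e he).1.1.1.1.1 ?_ (by norm_num) (by norm_num)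
    ⟨a, ha, σ, hσ, hfree⟩
  rw [neighborSet_embedding e (neighborSet_subset_range he)]
  exact ncard_image_embedding e _ (by decide)

theorem transitiveOn_galleries₃
    (h : TransitiveOn G (galleries₂ (corrGraph B) (genericFibre B))) :
    TransitiveOn G (galleries₃ (corrGraph B) (genericFibre B)) ∧
      (galleries₃ (corrGraph B) (genericFibre B)).ncard =
        (galleries₂ (corrGraph B) (genericFibre B)).ncard * 3 := by
  obtain ⟨σ, a, b, c, ha, hb, hc, -, hσb, hσc, hfree⟩ :=
    exists_fixed_gallery_mod_seven (G := G) hsplit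
  have hT : Equivariant G fun x : B × B => forward (corrGraph B) x.1 x.2 :=
    fun g _ _ h => smul_mem_forward corrGraph_adj_smul g h
  refine h.extend_of_smul_ne hT (embedding_mem_frames e he).1.1.1.1 ?_ (by norm_num) (by norm_num)
    ⟨(b, c), ⟨mem_genericFibre_of_adj ha hb, hc.1⟩, σ, Prod.ext hσb hσc, hfree⟩
  rw [forward_embedding e (neighborSet_subset_range he)]
  exact ncard_image_embedding e _ (by decide)

theorem transitiveOn_galleries₄
    (h : TransitiveOn G (galleries₃ (corrGraph B) (genericFibre B))) :
    TransitiveOn G (galleries₄ (corrGraph B) (genericFibre B)) ∧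
      (galleries₄ (corrGraph B) (genericFibre B)).ncard =
        (galleries₃ (corrGraph B) (genericFibre B)).ncard * 3 := by
  obtain ⟨σ, a, b, c, ha, hb, hc, hσa, hσb, hσc, hfree⟩ :=
    exists_fixed_gallery_mod_seven (G := G) hsplit
  have hT : Equivariant G fun x : (B × B) × B => forward (corrGraph B) x.1.2 x.2 :=
    fun g _ _ h => smul_mem_forward corrGraph_adj_smul g h
  refine h.extend_of_smul_ne hT (embedding_mem_frames e he).1.1.1 ?_ (by norm_num) (by norm_num)
    ⟨((a, b), c), ⟨⟨ha, hb⟩, hc⟩, σ, Prod.ext (Prod.ext hσa hσb) hσc, hfree⟩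
  rw [forward_embedding e (neighborSet_subset_range he)]
  exact ncard_image_embedding e _ (by decide)

theorem transitiveOn_markedGalleries
    (h : TransitiveOn G (galleries₄ (corrGraph B) (genericFibre B))) :
    TransitiveOn G (markedGalleries (corrGraph B) (genericFibre B)) ∧
      (markedGalleries (corrGraph B) (genericFibre B)).ncard =
        (galleries₄ (corrGraph B) (genericFibre B)).ncard * 2 := by
  obtain ⟨σ, a, b, c, d, f, u, ha, hb, hc, hd, hf, -, -, hσb, hσc, hσd, hσf, -, hfree⟩ :=
    exists_fixed_gallery_mod_seventyThree (G := G) hsplit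
  have hT : Equivariant G fun x : ((B × B) × B) × B =>
      (corrGraph B).commonNeighbors x.1.1.2 x.1.2 :=
    fun g _ _ h => smul_mem_commonNeighbors corrGraph_adj_smul g h
  refine h.extend_of_smul_ne hT (embedding_mem_frames e he).1.1 ?_ (by norm_num) (by norm_num)
    ⟨(((b, c), d), f), ⟨⟨⟨mem_genericFibre_of_adj ha hb, hc.1⟩, hd⟩, hf⟩, σ,
      Prod.ext (Prod.ext (Prod.ext hσb hσc) hσd) hσf, hfree⟩
  rw [commonNeighbors_embedding e (neighborSet_subset_range he)]
  exact ncard_image_embedding e _ (by decide)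

theorem transitiveOn_frames
    (h : TransitiveOn G (markedGalleries (corrGraph B) (genericFibre B))) :
    TransitiveOn G (frames (corrGraph B) (genericFibre B)) ∧
      (frames (corrGraph B) (genericFibre B)).ncard =
        (markedGalleries (corrGraph B) (genericFibre B)).ncard * 2 := by
  obtain ⟨σ, a, b, c, d, f, u, ha, hb, hc, hd, -, hu, hσa, hσb, hσc, hσd, -, hσu, hfree⟩ :=
    exists_fixed_gallery_mod_seventyThree (G := G) hsplit
  have hT : Equivariant G fun x : (((B × B) × B) × B) × B =>
      (corrGraph B).commonNeighbors x.1.1.2 x.1.2 :=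
    fun g _ _ h => smul_mem_commonNeighbors corrGraph_adj_smul g h
  refine h.extend_of_smul_ne hT (embedding_mem_frames e he).1 ?_ (by norm_num) (by norm_num)
    ⟨((((a, b), c), d), u), ⟨⟨⟨⟨ha, hb⟩, hc⟩, hd⟩, hu⟩, σ,
      Prod.ext (Prod.ext (Prod.ext (Prod.ext hσa hσb) hσc) hσd) hσu, hfree⟩
  rw [commonNeighbors_embedding e (neighborSet_subset_range he)]
  exact ncard_image_embedding e _ (by decide)

omit he in
theorem card_eq_of_transitiveOn_genericFibre (hV : TransitiveOn G (genericFibre B))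
    (hfaith : ∀ g : G, (∀ v ∈ genericFibre B, g • v = v) → g = 1) : Nat.card G = 11232 := by
  obtain ⟨e, he⟩ := exists_flagGraph_embedding (G := G) hsplit
  obtain ⟨h₂, hcard₂⟩ := transitiveOn_galleries₂ he hsplit hV
  obtain ⟨h₃, hcard₃⟩ := transitiveOn_galleries₃ he hsplit h₂
  obtain ⟨h₄, hcard₄⟩ := transitiveOn_galleries₄ he hsplit h₃
  obtain ⟨h₅, hcard₅⟩ := transitiveOn_markedGalleries he hsplit h₄
  obtain ⟨h₆, hcard₆⟩ := transitiveOn_frames he hsplit h₅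
  rw [h₆.card_eq_ncard (embedding_mem_frames e he)
    fun g hg => eq_one_of_smul_frame_eq_self he hfaith hg, hcard₆, hcard₅, hcard₄, hcard₃, hcard₂,
    ncard_genericFibre he]

end CardGroup

section Irreducible

theorem isUnit_of_dvd_monic_of_dvd_C {R : Type*} [CommRing R] [IsDomain R] {f g : R[X]} {a : R}
    (hf : f.Monic) (ha : a ≠ 0) (hgf : g ∣ f) (hga : g ∣ C a) : IsUnit g := by
  have hdeg : g.natDegree = 0 :=
    Nat.le_zero.1 ((natDegree_le_of_dvd hga (C_ne_zero.2 ha)).trans_eq (natDegree_C a))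
  rw [eq_C_of_natDegree_eq_zero hdeg] at hgf ⊢
  exact isUnit_C.2 (hf.isPrimitive _ hgf)

theorem isRelPrime_denom_numer : IsRelPrime (27 * denom (X : ℤ[X])) (numer X) := by
  have hmonic : (numer X : ℤ[X]).Monic := by
    simpa only [fibrePoly, mul_zero, map_zero, zero_mul, add_zero] using fibrePoly_monic (0 : ℤ)
  refine WfDvdMonoid.isRelPrime_of_no_irreducible_factors (fun h => hmonic.ne_zero h.2)
    fun P hP hden hnum => ?_
  have : (Ideal.span {P}).IsPrime := (Ideal.span_singleton_prime hP.ne_zero).2 hP.prime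
  let ψ := Ideal.Quotient.mk (Ideal.span {P})
  have h6 : (6 : ℤ[X] ⧸ Ideal.span {P}) ≠ 0 := by
    intro h
    rw [← map_ofNat ψ 6, Ideal.Quotient.eq_zero_iff_dvd] at h
    exact hP.not_isUnit (isUnit_of_dvd_monic_of_dvd_C hmonic (a := 6) (by norm_num) hnum h)
  rw [← Ideal.Quotient.eq_zero_iff_dvd] at hden hnum
  rw [map_mul, map_denom, map_ofNat] at hden
  rw [map_numer] at hnum
  refine (numer_ne_zero_or_denom_ne_zero h6 (ψ X)).elim (· hnum) (· ?_)
  refine (mul_eq_zero.1 (?_ : 6 ^ 3 * denom (ψ X) = 0)).resolve_left (pow_ne_zero 3 h6)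
  linear_combination 8 * hden

/-- The equation is linear in the parameter. -/
theorem irreducible_fibrePoly_X : Irreducible (fibrePoly (X : ℤ[X])) := by
  have hswap : Bivariate.swap (C (27 * denom X) * X + C (numer X)) = fibrePoly (X : ℤ[X]) := by
    rw [map_add, map_mul, Bivariate.swap_C, Bivariate.swap_C, Bivariate.swap_Y, ← coe_mapRingHom,
      map_mul, map_denom, map_numer, map_ofNat, coe_mapRingHom, map_X, fibrePoly, C_mul, map_ofNat]
    ring
  have hdenom : 27 * denom (X : ℤ[X]) ≠ 0 := fun h => by
    have := congrArg (evalRingHom 0) h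
    rw [map_mul, map_denom, coe_evalRingHom, eval_X] at this
    norm_num [denom] at this
  rw [← hswap, MulEquiv.irreducible_iff]
  exact irreducible_C_mul_X_add_C hdenom isRelPrime_denom_numer

theorem exists_smul_eq_of_irreducible {A B G : Type*} [CommRing A] [IsDomain A]
    [IsIntegrallyClosed A] [CommRing B] [IsDomain B] [Algebra A B] [Module.IsTorsionFree A B]
    [Group G] [Finite G] [MulSemiringAction G B] [Algebra.IsInvariant A B G] {f : A[X]}
    (hf : f.Monic) (hirr : Irreducible f) {a b : B} (ha : aeval a f = 0) (hb : aeval b f = 0) :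
    ∃ g : G, g • a = b := by
  have := Fintype.ofFinite G
  have hintegral : IsIntegral A a := ⟨f, hf, ha⟩
  have hdvd : f ∣ minpoly A a := (minpoly.irreducible hintegral).dvd_symm hirr
    (minpoly.isIntegrallyClosed_dvd hintegral ha)
  obtain ⟨h, hh⟩ := Algebra.IsInvariant.charpoly_mem_lifts A B G a
  rw [coe_mapRingHom] at hh
  have hha : aeval a h = 0 := by
    rw [aeval_def, eval₂_eq_eval_map, hh, MulSemiringAction.eval_charpoly]
  have hhb : aeval b h = 0 := aeval_eq_zero_of_dvd_aeval_eq_zero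
    (hdvd.trans (minpoly.isIntegrallyClosed_dvd hintegral hha)) hb
  rw [aeval_def, eval₂_eq_eval_map, hh, MulSemiringAction.charpoly_eq, eval_prod,
    Finset.prod_eq_zero_iff] at hhb
  obtain ⟨g, -, hg⟩ := hhb
  rw [eval_sub, eval_X, eval_C, sub_eq_zero] at hg
  exact ⟨g, hg.symm⟩

theorem aeval_fibrePoly_X {B : Type*} [CommRing B] [Algebra ℤ[X] B] {v : B} :
    aeval v (fibrePoly (X : ℤ[X])) = 0 ↔ v ∈ genericFibre B := by
  rw [aeval_def, eval₂_eq_eval_map, map_fibrePoly, ← IsRoot, isRoot_fibrePoly]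

theorem transitiveOn_genericFibre {B G : Type*} [CommRing B] [IsDomain B] [Algebra ℤ[X] B]
    [FaithfulSMul ℤ[X] B] [Group G] [Finite G] [MulSemiringAction G B] [SMulCommClass G ℤ[X] B]
    [Algebra.IsInvariant ℤ[X] B G] : TransitiveOn G (genericFibre B) where
  smul_mem g _ := smul_mem_genericFibre g
  exists_smul_eq ha hb := exists_smul_eq_of_irreducible (fibrePoly_monic X) irreducible_fibrePoly_X
    (aeval_fibrePoly_X.2 ha) (aeval_fibrePoly_X.2 hb)

end Irreducible

section Galois

theorem isIntegral_of_mem_genericFibre {B : Type*} [CommRing B] [Algebra ℤ[X] B] {v : B}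
    (hv : v ∈ genericFibre B) : IsIntegral ℤ[X] v :=
  ⟨fibrePoly X, fibrePoly_monic X, by rw [← aeval_def]; exact aeval_fibrePoly_X.2 hv⟩

variable {K : Type*} [Field K] [Algebra ℤ[X] K] [IsFractionRing ℤ[X] K]

theorem irreducible_fibrePoly_algebraMap : Irreducible (fibrePoly (algebraMap ℤ[X] K X)) := by
  rw [← map_fibrePoly, ← (fibrePoly_monic _).irreducible_iff_irreducible_map_fraction_map]
  exact irreducible_fibrePoly_X

variable {L : Type*} [Field L] [Algebra ℤ[X] L]

section IntegralClosure

variable {B : Type*} [CommRing B] [Algebra ℤ[X] B] [Algebra B L] [IsScalarTower ℤ[X] B L]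
  [IsIntegralClosure B ℤ[X] L]

theorem exists_mem_genericFibre_algebraMap_eq {v : L} (hv : v ∈ genericFibre L) :
    ∃ w ∈ genericFibre B, algebraMap B L w = v := by
  obtain ⟨w, rfl⟩ := (IsIntegralClosure.isIntegral_iff (A := B)).1
    (isIntegral_of_mem_genericFibre hv)
  refine ⟨w, (map_mem_fibre_iff (IsIntegralClosure.algebraMap_injective B ℤ[X] L)).1 ?_, rfl⟩
  rwa [← IsScalarTower.algebraMap_apply]

theorem splits_fibrePoly_of_isIntegralClosure [IsDomain B]
    (hsplit : (fibrePoly (algebraMap ℤ[X] L X)).Splits) :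
    (fibrePoly (algebraMap ℤ[X] B X)).Splits := by
  have hmap : (fibrePoly (algebraMap ℤ[X] B X)).map (algebraMap B L) =
      fibrePoly (algebraMap ℤ[X] L X) := by
    rw [map_fibrePoly, ← IsScalarTower.algebraMap_apply]
  rw [← hmap] at hsplit
  refine Splits.of_splits_map_of_injective (IsIntegralClosure.algebraMap_injective B ℤ[X] L) hsplit
    fun v hv => ?_
  rw [hmap, mem_roots_fibrePoly] at hv
  obtain ⟨w, -, hw⟩ := exists_mem_genericFibre_algebraMap_eq (B := B) hv
  exact ⟨w, hw⟩

end IntegralClosure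

variable [Algebra K L] [IsScalarTower ℤ[X] K L]

theorem card_gal_of_splits [FiniteDimensional K L] [IsGalois K L]
    (hsplit : (fibrePoly (algebraMap ℤ[X] L X)).Splits)
    (hfaith : ∀ g : Gal(L/K), (∀ v ∈ genericFibre L, g v = v) → g = 1) :
    Nat.card Gal(L/K) = 11232 := by
  let B := integralClosure ℤ[X] L
  have : FaithfulSMul ℤ[X] L := FaithfulSMul.trans ℤ[X] K L
  have : IsFractionRing B L := IsIntegralClosure.isFractionRing_of_finite_extension ℤ[X] K L B
  let := IsIntegralClosure.MulSemiringAction ℤ[X] K L B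
  have := Algebra.isInvariant_of_isGalois ℤ[X] K L B
  have : SMulCommClass Gal(L/K) ℤ[X] B :=
    ⟨fun g a b => map_smul (galRestrict ℤ[X] K L B g) a b⟩
  refine card_eq_of_transitiveOn_genericFibre (B := B)
    (splits_fibrePoly_of_isIntegralClosure hsplit) transitiveOn_genericFibre
    fun g hg => hfaith g fun v hv => ?_
  obtain ⟨w, hw, rfl⟩ := exists_mem_genericFibre_algebraMap_eq (B := B) hv
  rw [← algebraMap_galRestrict_apply ℤ[X] g w]
  exact congrArg (algebraMap B L) (hg w hw)

end Galois

section Rescaling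

variable {K : Type*} [Field K] {g : K[X]} {a u : K}

theorem natDegree_C_mul_comp_C_mul_X (hu : u ≠ 0) (ha : a ≠ 0) :
    (C u * g.comp (C a * X)).natDegree = g.natDegree := by
  rw [natDegree_C_mul hu, natDegree_comp, natDegree_C_mul_X _ ha, mul_one]

theorem irreducible_C_mul_comp_C_mul_X (hu : u ≠ 0) (ha : a ≠ 0) :
    Irreducible (C u * g.comp (C a * X)) ↔ Irreducible g := by
  let := invertibleOfNonzero ha
  rw [irreducible_isUnit_mul (isUnit_C.2 hu.isUnit),
    ← MulEquiv.irreducible_iff (algEquivCMulXAddC a 0) (x := g), algEquivCMulXAddC_apply, C_0,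
    add_zero, ← comp_eq_aeval]

theorem splits_C_mul_comp_C_mul_X (hu : u ≠ 0) (ha : a ≠ 0) :
    (C u * g.comp (C a * X)).Splits ↔ g.Splits := by
  have hlin (b : K) : (C b * X).natDegree ≤ 1 := (natDegree_C_mul_le _ _).trans natDegree_X_le
  have hcomp : (g.comp (C a * X)).comp (C a⁻¹ * X) = g := by
    rw [comp_assoc, mul_comp, C_comp, X_comp, ← mul_assoc, ← C_mul, mul_inv_cancel₀ ha, C_1,
      one_mul, comp_X]
  rw [splits_mul_iff_right (C_ne_zero.2 hu) (Splits.C _)]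
  exact ⟨fun h => hcomp ▸ h.comp_of_natDegree_le_one (hlin a⁻¹),
    fun h => h.comp_of_natDegree_le_one (hlin a)⟩

theorem isSplittingField_of_eq_C_mul_comp_C_mul_X {f : K[X]} (hf : f = C u * g.comp (C a * X))
    (hu : u ≠ 0) (ha : a ≠ 0) (L : Type*) [Field L] [Algebra K L] [h : f.IsSplittingField K L] :
    g.IsSplittingField K L := by
  subst hf
  have hmap : (C u * g.comp (C a * X)).map (algebraMap K L) =
      C (algebraMap K L u) * (g.map (algebraMap K L)).comp (C (algebraMap K L a) * X) := by
    simp only [Polynomial.map_mul, Polynomial.map_comp, map_C, map_X]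
  refine ⟨?_, eq_top_iff.2 ?_⟩
  · rw [← splits_C_mul_comp_C_mul_X ((map_ne_zero (algebraMap K L)).2 hu)
      ((map_ne_zero (algebraMap K L)).2 ha), ← hmap]
    exact h.splits
  · rw [← h.adjoin_rootSet, Algebra.adjoin_le_iff]
    intro x hx
    have hg : g ≠ 0 := by rintro rfl; simp at hx
    have hroot : a • x ∈ g.rootSet L := by
      have := aeval_eq_zero_of_mem_rootSet hx
      rw [aeval_mul, aeval_C, aeval_comp, mul_eq_zero, map_eq_zero, or_iff_right hu, aeval_mul,
        aeval_C, aeval_X, ← Algebra.smul_def] at this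
      exact mem_rootSet.2 ⟨hg, this⟩
    rw [← inv_smul_smul₀ ha x]
    exact Subalgebra.smul_mem _ (Algebra.subset_adjoin hroot) _

end Rescaling

section SplittingField

theorem algEquiv_eq_one_of_isSplittingField {K L : Type*} [Field K] [Field L] [Algebra K L]
    (f : K[X]) [f.IsSplittingField K L] {g : Gal(L/K)} (hg : ∀ v ∈ f.rootSet L, g v = v) :
    g = 1 := by
  have : (g : L →ₐ[K] L) = AlgHom.id K L :=
    AlgHom.ext_of_adjoin_eq_top (IsSplittingField.adjoin_rootSet L f) hg
  exact AlgEquiv.ext fun x => DFunLike.congr_fun this x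

variable {K : Type*} (L : Type*) [Field K] [CharZero K] [Algebra ℤ[X] K] [IsFractionRing ℤ[X] K]
  [Field L] [Algebra K L]

theorem card_gal_of_isSplittingField [(fibrePoly (algebraMap ℤ[X] K X)).IsSplittingField K L] :
    Nat.card Gal(L/K) = 11232 := by
  let f := fibrePoly (algebraMap ℤ[X] K X)
  have : FiniteDimensional K L := IsSplittingField.finiteDimensional L f
  have : Normal K L := Normal.of_isSplittingField f
  have : IsGalois K L := {}
  let := Algebra.compHom L (algebraMap ℤ[X] K)
  have : IsScalarTower ℤ[X] K L := IsScalarTower.of_algebraMap_eq' rfl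
  have hmap : f.map (algebraMap K L) = fibrePoly (algebraMap ℤ[X] L X) :=
    map_fibrePoly _ _
  refine card_gal_of_splits (hmap ▸ IsSplittingField.splits L f) fun g hg =>
    algEquiv_eq_one_of_isSplittingField f fun v hv => hg v ?_
  rw [← mem_roots_fibrePoly, ← hmap]
  exact (mem_rootSet'.1 hv).elim fun h₀ h => (mem_roots h₀).2 (by rwa [IsRoot, eval_map_algebraMap])

end SplittingField

section Parameter

theorem isFractionRing_of_closure_range_eq_top {A K : Type*} [CommRing A] [Field K] [Algebra A K]
    [FaithfulSMul A K] (h : Subfield.closure (Set.range (algebraMap A K)) = ⊤) :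
    IsFractionRing A K := by
  refine IsFractionRing.of_field A K fun z => ?_
  obtain ⟨a, ha, b, hb, rfl⟩ := Subfield.mem_closure_iff.1 (h ▸ Subfield.mem_top z)
  rw [← RingHom.coe_range, Subring.closure_eq] at ha hb
  obtain ⟨⟨a, rfl⟩, b, rfl⟩ := ha, hb
  exact ⟨a, b, rfl⟩

theorem one_sub_ratFuncX_ne_zero {k : Type*} [Field k] : (1 - RatFunc.X : RatFunc k) ≠ 0 := by
  rw [sub_ne_zero, ne_comm, ← RatFunc.algebraMap_X, ← map_one (algebraMap k[X] _)]
  exact (RatFunc.algebraMap_injective k).ne (X_ne_C 1)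

theorem transcendental_ratFuncX_div {k : Type*} [Field k] [CharZero k] :
    Transcendental ℤ (RatFunc.X / (1 - RatFunc.X) : RatFunc k) := by
  refine (RatFunc.transcendental_of_ne_C (K := k) _ ?_).restrictScalars
    (algebraMap ℤ k).injective_int
  rintro ⟨c, hc⟩
  rw [div_eq_iff one_sub_ratFuncX_ne_zero, ← RatFunc.algebraMap_X, ← RatFunc.algebraMap_C,
    ← map_one (algebraMap k[X] _), ← map_sub, ← map_mul] at hc
  have := congrArg (eval 1) (RatFunc.algebraMap_injective k hc)
  simp at this

theorem closure_range_C_union_ratFuncX {k : Type*} [Field k] :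
    Subfield.closure (Set.range (RatFunc.C : k →+* RatFunc k) ∪ {RatFunc.X}) = ⊤ := by
  rw [← RatFunc.algebraMap_eq_C, ← IntermediateField.adjoin_toSubfield, RatFunc.adjoin_X,
    IntermediateField.top_toSubfield]

theorem isFractionRing_ratFunc [Algebra ℤ[X] (RatFunc ℚ)]
    (hX : algebraMap ℤ[X] (RatFunc ℚ) X = RatFunc.X / (1 - RatFunc.X)) :
    IsFractionRing ℤ[X] (RatFunc ℚ) := by
  have haeval : algebraMap ℤ[X] (RatFunc ℚ) =
      (aeval (RatFunc.X / (1 - RatFunc.X)) : ℤ[X] →ₐ[ℤ] RatFunc ℚ) :=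
    ringHom_ext' (RingHom.ext_int _ _) (by rw [hX, RingHom.coe_coe, aeval_X])
  have : FaithfulSMul ℤ[X] (RatFunc ℚ) := by
    rw [faithfulSMul_iff_algebraMap_injective, haeval]
    exact transcendental_iff_injective.1 transcendental_ratFuncX_div
  refine isFractionRing_of_closure_range_eq_top (eq_top_iff.2 ?_)
  set S := Subfield.closure (Set.range (algebraMap ℤ[X] (RatFunc ℚ)))
  have hs : RatFunc.X / (1 - RatFunc.X) ∈ S := hX ▸ Subfield.subset_closure ⟨X, rfl⟩
  have hmem : RatFunc.X ∈ S := by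
    convert div_mem hs (add_mem (one_mem S) hs) using 1
    have := one_sub_ratFuncX_ne_zero (k := ℚ)
    field_simp
    ring
  rw [← closure_range_C_union_ratFuncX, Subfield.closure_le, Set.union_subset_iff,
    Set.singleton_subset_iff, Set.range_subset_iff]
  refine ⟨fun c => ?_, hmem⟩
  rw [eq_ratCast]
  exact SubfieldClass.ratCast_mem S c

end Parameter

section Comparison

theorem numer_two_mul_X : numer (2 * X) = C (2 ^ 28) * p.map (algebraMap ℚ (RatFunc ℚ)) := by
  simp only [numer, p, Polynomial.map_mul, Polynomial.map_pow, Polynomial.map_sub,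
    Polynomial.map_add, map_X, Polynomial.map_ofNat, Polynomial.map_one, map_pow, map_ofNat]
  ring

theorem denom_two_mul_X : 27 * denom (2 * X) = C (2 ^ 28) * r.map (algebraMap ℚ (RatFunc ℚ)) := by
  simp only [denom, r, Polynomial.map_mul, Polynomial.map_pow, Polynomial.map_sub,
    Polynomial.map_add, map_X, Polynomial.map_ofNat, Polynomial.map_one, map_pow, map_ofNat]
  ring

theorem C_mul_F_eq :
    C (2 ^ 28) * F =
      C (1 - RatFunc.X) * (fibrePoly (RatFunc.X / (1 - RatFunc.X))).comp (C 2 * X) := by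
  have hcomp : (fibrePoly (RatFunc.X / (1 - RatFunc.X) : RatFunc ℚ)).comp (C 2 * X) =
      numer (2 * X) + C (RatFunc.X / (1 - RatFunc.X)) * (27 * denom (2 * X)) := by
    rw [← coe_compRingHom_apply, fibrePoly, map_add, map_mul, map_numer, map_denom,
      coe_compRingHom_apply, coe_compRingHom_apply, C_comp, X_comp, C_mul]
    simp only [map_ofNat]
    ring
  rw [hcomp, numer_two_mul_X, denom_two_mul_X, F, q, Polynomial.map_sub]
  have hparam : C (1 - RatFunc.X : RatFunc ℚ) * C (RatFunc.X / (1 - RatFunc.X)) = C RatFunc.X := by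
    rw [← C_mul, mul_div_cancel₀ _ one_sub_ratFuncX_ne_zero]
  have hsub : C (1 - RatFunc.X : RatFunc ℚ) = 1 - C RatFunc.X := by rw [C_sub, C_1]
  linear_combination (-C (2 ^ 28) * r.map (algebraMap ℚ (RatFunc ℚ))) * hparam -
    C (2 ^ 28) * p.map (algebraMap ℚ (RatFunc ℚ)) * hsub

theorem F_eq : F = C ((2 ^ 28)⁻¹ * (1 - RatFunc.X)) *
    (fibrePoly (RatFunc.X / (1 - RatFunc.X))).comp (C 2 * X) := by
  have h28 : (2 ^ 28 : RatFunc ℚ) ≠ 0 := pow_ne_zero 28 two_ne_zero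
  rw [C_mul, mul_assoc, ← C_mul_F_eq, ← mul_assoc, ← C_mul, inv_mul_cancel₀ h28, C_1, one_mul]

end Comparison

end Belyi

theorem belyi_deg52_stmt12 :
    F.natDegree = 52 ∧ Irreducible F ∧ Nat.card F.Gal = 11232 := by
  let : Algebra ℤ[X] (RatFunc ℚ) := (aeval (R := ℤ) (RatFunc.X / (1 - RatFunc.X))).toAlgebra
  have hX : algebraMap ℤ[X] (RatFunc ℚ) X = RatFunc.X / (1 - RatFunc.X) := aeval_X _
  have := Belyi.isFractionRing_ratFunc hX
  have hunit : ((2 ^ 28)⁻¹ * (1 - RatFunc.X) : RatFunc ℚ) ≠ 0 :=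
    mul_ne_zero (inv_ne_zero (pow_ne_zero 28 two_ne_zero)) Belyi.one_sub_ratFuncX_ne_zero
  have hF := Belyi.F_eq
  rw [← hX] at hF
  refine ⟨?_, ?_, ?_⟩
  · rw [hF, Belyi.natDegree_C_mul_comp_C_mul_X hunit two_ne_zero, Belyi.fibrePoly_natDegree]
  · rw [hF, Belyi.irreducible_C_mul_comp_C_mul_X hunit two_ne_zero]
    exact Belyi.irreducible_fibrePoly_algebraMap
  · have := Belyi.isSplittingField_of_eq_C_mul_comp_C_mul_X hF hunit two_ne_zero F.SplittingField
    exact Belyi.card_gal_of_isSplittingField F.SplittingField
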